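/- arXiv:1804.03647 — 4 statements merged into one kernel-verified Lean document; each statement's English description precedes it below -/
import Mathlib

section
/- Let B ∈ ℤ^{n×2} be of rank 2 with columns B_1, B_2, such that ℤB is a positive lattice and, for 1 ≤ i ≤ 4, the i-th row of B lies in the i-th open quadrant of ℝ². Let C∘ be the fiber of ℤ^n/ℤB containing (B_1)_+ + (B_2)_+. Then the only coordinatewise-nonnegative elements of C∘ are the four vectors (B_1)_+ + (B_2)_+, (B_1)_+ + (B_2)_−, (B_1)_− + (B_2)_+, and (B_1)_− + (B_2)_−. -/
/-!
Every element of the fiber has the form `(B₁)₊ + (B₂)₊ + s B₁ + t B₂` with `s, t ∈ ℤ`, and the four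
listed vectors are those with `s, t ∈ {0, -1}`, because `z₊ - z = z₋`.  Nonnegativity of the four
coordinates whose rows lie in the four open quadrants already forces `s, t ∈ {0, -1}`
(`lattice_coords_bound`): for instance, if `s ≥ 1`, then the row of sign pattern `(-,-)` gives
`t < 0`, while the row of sign pattern `(-,+)` gives `t ≥ 0`.
-/

open MvPolynomial

section LatticeDefs

variable {V κ : Type*}

/-- The exponent vector of the positive part `u₊` of an integer vector `u`. -/
noncomputable def posExp [Fintype V] (u : V → ℤ) : V →₀ ℕ :=
  Finsupp.equivFunOnFinite.symm fun i => (u i).toNat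

/-- The exponent vector of the negative part `u₋` of an integer vector `u`. -/
noncomputable def negExp [Fintype V] (u : V → ℤ) : V →₀ ℕ :=
  Finsupp.equivFunOnFinite.symm fun i => (-u i).toNat

/-- The binomial `x^{u₊} - x^{u₋}` associated to an integer vector `u`. -/
noncomputable def latticeBinomial (k : Type*) [CommRing k] [Fintype V] (u : V → ℤ) :
    MvPolynomial V k :=
  monomial (posExp u) (1 : k) - monomial (negExp u) (1 : k)

/-- The lattice ideal `I_L = ⟨x^{u₊} - x^{u₋} : u ∈ L⟩` of a lattice `L ⊆ ℤ^V`. -/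
noncomputable def latticeIdeal (k : Type*) [CommRing k] [Fintype V]
    (L : Submodule ℤ (V → ℤ)) : Ideal (MvPolynomial V k) :=
  Ideal.span {p | ∃ u ∈ L, p = latticeBinomial k u}

/-- A lattice `L ⊆ ℤ^V` is positive if `L ∩ ℕ^V = {0}`. -/
def IsPositiveLattice (L : Submodule ℤ (V → ℤ)) : Prop :=
  ∀ u ∈ L, (∀ i, 0 ≤ u i) → u = 0

/-- The rank of a lattice. -/
noncomputable def latticeRank (L : Submodule ℤ (V → ℤ)) : ℕ :=
  Module.finrank ℤ L

/-- The lattice `ℤB` spanned by the columns of an integer matrix `B`. -/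
def colSpan [Fintype κ] (B : Matrix V κ ℤ) : Submodule ℤ (V → ℤ) :=
  LinearMap.range B.mulVecLin

/-- The ideal `I` can be generated by `m` elements (`I` is a complete intersection when
`m` is the codimension of `I`). -/
def IsCI {R : Type*} [CommRing R] (I : Ideal R) (m : ℕ) : Prop :=
  ∃ f : Fin m → R, Ideal.span (Set.range f) = I

/-- A matrix is mixed if every column contains a strictly positive and a strictly
negative entry. -/
def Mixed (B : Matrix V κ ℤ) : Prop :=
  ∀ j, (∃ i, 0 < B i j) ∧ (∃ i, B i j < 0)

/-- A matrix is dominating if it contains no square mixed submatrices. -/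
def Dominating {a b : ℕ} (B : Matrix (Fin a) (Fin b) ℤ) : Prop :=
  ∀ s : ℕ, s ≠ 0 → ∀ (r : Fin s → Fin a) (c : Fin s → Fin b),
    Function.Injective r → Function.Injective c → ¬ Mixed (B.submatrix r c)

/-- The columns of `B` form a `ℤ`-basis of the lattice `L` (so that the rows of `B`
are a Gale diagram of `L`). -/
def IsLatticeBasis {n m : ℕ} (L : Submodule ℤ (Fin n → ℤ)) (B : Matrix (Fin n) (Fin m) ℤ) :
    Prop :=
  LinearIndependent ℤ (fun j : Fin m => fun i => B i j) ∧ colSpan B = L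

/-- The Gale diagram given by the rows of `B` is imbalanced: each row has `b_{i1} = 0`
or `b_{i2} ≥ 0`. -/
def Imbalanced {n : ℕ} (B : Matrix (Fin n) (Fin 2) ℤ) : Prop :=
  ∀ i, B i 0 = 0 ∨ 0 ≤ B i 1

/-- The rows of `B` meet all four open quadrants of `ℝ²`. -/
def MeetsFourQuadrants {n : ℕ} (B : Matrix (Fin n) (Fin 2) ℤ) : Prop :=
  (∃ i, 0 < B i 0 ∧ 0 < B i 1) ∧ (∃ i, 0 < B i 0 ∧ B i 1 < 0) ∧
    (∃ i, B i 0 < 0 ∧ 0 < B i 1) ∧ (∃ i, B i 0 < 0 ∧ B i 1 < 0)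

/-- The saturation `L^sat = {u : m • u ∈ L for some positive integer m}` of a lattice. -/
noncomputable def saturation (L : Submodule ℤ (V → ℤ)) : Submodule ℤ (V → ℤ) where
  carrier := {u | ∃ m : ℕ, 0 < m ∧ (m : ℤ) • u ∈ L}
  zero_mem' := ⟨1, one_pos, by simp⟩
  add_mem' := by
    rintro a b ⟨p, hp, hpa⟩ ⟨q, hq, hqb⟩
    refine ⟨p * q, Nat.mul_pos hp hq, ?_⟩
    have ha : ((p * q : ℕ) : ℤ) • a ∈ L := by
      have h : ((p * q : ℕ) : ℤ) • a = (q : ℤ) • ((p : ℤ) • a) := by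
        rw [smul_smul]; push_cast; rw [mul_comm]
      rw [h]; exact L.smul_mem _ hpa
    have hb : ((p * q : ℕ) : ℤ) • b ∈ L := by
      have h : ((p * q : ℕ) : ℤ) • b = (p : ℤ) • ((q : ℤ) • b) := by
        rw [smul_smul]; push_cast; ring_nf
      rw [h]; exact L.smul_mem _ hqb
    rw [smul_add]
    exact L.add_mem ha hb
  smul_mem' := by
    rintro c a ⟨p, hp, hpa⟩
    exact ⟨p, hp, by rw [smul_comm]; exact L.smul_mem _ hpa⟩

/-- The data `(σ, A, p)` of a finite free resolution of `k[x]/I`: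
`⋯ → k[x]^{σ(j+1)} --A j--> k[x]^{σ j} → ⋯ → k[x]^{σ 0} --v ↦ Σ v g * p g--> k[x]/I → 0`
is exact. -/
def IsFreeResolution (k : Type*) [Field k] [Fintype V]
    (I : Ideal (MvPolynomial V k)) (σ : ℕ → Type) [∀ j, Fintype (σ j)]
    (A : ∀ j, Matrix (σ j) (σ (j + 1)) (MvPolynomial V k))
    (p : σ 0 → MvPolynomial V k) : Prop :=
  Ideal.span (Set.range p) ⊔ I = ⊤ ∧
    (∀ v : σ 0 → MvPolynomial V k,
      (∑ g, v g * p g) ∈ I ↔ v ∈ LinearMap.range (A 0).mulVecLin) ∧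
    ∀ j, LinearMap.ker (A j).mulVecLin = LinearMap.range (A (j + 1)).mulVecLin

/-- `k[x]/I` admits a free resolution of length at most `m`. -/
def HasFreeResolutionOfLength (k : Type*) [Field k] [Fintype V]
    (I : Ideal (MvPolynomial V k)) (m : ℕ) : Prop :=
  ∃ (σ : ℕ → Type) (hfin : ∀ j, Fintype (σ j))
    (A : ∀ j, Matrix (σ j) (σ (j + 1)) (MvPolynomial V k))
    (p : σ 0 → MvPolynomial V k),
    (∀ j, m < j → IsEmpty (σ j)) ∧ @IsFreeResolution V k _ _ I σ hfin A p

/-- Cohen–Macaulayness of `k[x]/I_L` for a positive lattice `L`, via the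
Auslander–Buchsbaum characterization: the quotient is Cohen–Macaulay if and only if its
projective dimension over `k[x]` equals the codimension `rank L` of `I_L`, i.e. iff it
admits a free resolution of length `rank L`. -/
def IsCMLatticeQuotient (k : Type*) [Field k] [Fintype V]
    (L : Submodule ℤ (V → ℤ)) : Prop :=
  HasFreeResolutionOfLength k (latticeIdeal k L) (latticeRank L)

/-- The degree in `Γ = ℤ^V/L` of the monomial with exponent vector `u`. -/
noncomputable def degQ [Fintype V] (L : Submodule ℤ (V → ℤ)) (u : V →₀ ℕ) :
    (V → ℤ) ⧸ L :=
  Submodule.Quotient.mk fun i => (u i : ℤ)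

/-- The data `(σ, deg, A, p)` is a minimal free resolution of `k[x]/I_L`, graded by
`Γ = ℤ^V/L`: a free resolution in which all differentials (and the augmentation) are
homogeneous for the degrees `deg` of the generators and have entries with zero constant
term.  The `Γ`-graded Betti number `β_{j,C}` of `k[x]/I_L` is then the number of
generators `g : σ j` with `deg j g = C`. -/
def IsMinimalGradedFreeResolution (k : Type*) [Field k] [Fintype V]
    (L : Submodule ℤ (V → ℤ)) (σ : ℕ → Type) [∀ j, Fintype (σ j)]
    (deg : ∀ j, σ j → ((V → ℤ) ⧸ L))
    (A : ∀ j, Matrix (σ j) (σ (j + 1)) (MvPolynomial V k))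
    (p : σ 0 → MvPolynomial V k) : Prop :=
  IsFreeResolution k (latticeIdeal k L) σ A p ∧
    (∀ g, ∀ u ∈ (p g).support, degQ L u = deg 0 g) ∧
    (∀ j g f, ∀ u ∈ (A j g f).support, degQ L u + deg j g = deg (j + 1) f) ∧
    ∀ j g f, MvPolynomial.coeff 0 (A j g f) = 0

/-- `F` is a face of the simplicial complex `Δ_C` attached to the fiber `C = c + L`:
the fiber contains a coordinatewise nonnegative vector whose support contains `F`. -/
def FaceOf (L : Submodule ℤ (V → ℤ)) (c : V → ℤ) (F : Finset V) : Prop :=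
  ∃ a : V → ℤ, (∀ i, 0 ≤ a i) ∧ a - c ∈ L ∧ ∀ i ∈ F, a i ≠ 0

/-- The simplicial boundary matrix of the complex whose faces are given by `P`, from
chains on `(d+1)`-element faces to chains on `d`-element faces. -/
noncomputable def boundaryMatrix (k : Type*) [Field k] [LinearOrder V]
    (P : Finset V → Prop) (d : ℕ) :
    Matrix {F : Finset V // P F ∧ F.card = d} {F : Finset V // P F ∧ F.card = d + 1} k :=
  fun G F =>
    if G.1 ⊆ F.1 then
      ∑ i ∈ F.1 \ G.1, (-1 : k) ^ (F.1.filter fun x => x < i).card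
    else 0

/-- The rank of the `j`-th reduced simplicial homology, with coefficients in `k`, of the
simplicial complex whose faces are given by `P`:
`dim ker ∂_j - dim im ∂_{j+1}` where chains in homological degree `j` live on faces with
`j+1` elements. -/
noncomputable def reducedHomologyRank (k : Type*) [Field k] [Fintype V] [LinearOrder V]
    (P : Finset V → Prop) (j : ℕ) : ℕ :=
  letI : Fintype {F : Finset V // P F ∧ F.card = j + 1} := Fintype.ofFinite _
  letI : Fintype {F : Finset V // P F ∧ F.card = j + 1 + 1} := Fintype.ofFinite _
  Fintype.card {F : Finset V // P F ∧ F.card = j + 1} -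
    (boundaryMatrix k P j).rank - (boundaryMatrix k P (j + 1)).rank

end LatticeDefs
/-- The four inequalities are the nonnegativity of the coordinates of
`(B₁)₊ + (B₂)₊ + s B₁ + t B₂` at rows `(pⱼ, qⱼ)` in the four open quadrants. -/
lemma lattice_coords_bound {p₁ q₁ p₂ q₂ p₃ q₃ p₄ q₄ s t : ℤ}
    (h1 : 0 < p₁ ∧ 0 < q₁) (h2 : 0 < p₂ ∧ q₂ < 0) (h3 : p₃ < 0 ∧ 0 < q₃) (h4 : p₄ < 0 ∧ q₄ < 0)
    (e1 : 0 ≤ p₁ * (1 + s) + q₁ * (1 + t)) (e2 : 0 ≤ p₂ * (1 + s) + q₂ * t)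
    (e3 : 0 ≤ p₃ * s + q₃ * (1 + t)) (e4 : 0 ≤ p₄ * s + q₄ * t) :
    (s = 0 ∨ s = -1) ∧ (t = 0 ∨ t = -1) := by
  obtain ⟨hp1, hq1⟩ := h1
  obtain ⟨hp2, hq2⟩ := h2
  obtain ⟨hp3, hq3⟩ := h3
  obtain ⟨hp4, hq4⟩ := h4
  have hs1 : s ≤ 0 := by
    by_contra! hs
    rcases le_or_gt 0 t with ht | ht <;> nlinarith
  have hs2 : -1 ≤ s := by
    by_contra! hs
    rcases le_or_gt 0 t with ht | ht <;> nlinarith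
  have ht1 : t ≤ 0 := by
    by_contra! ht
    rcases le_or_gt 0 s with hs | hs <;> nlinarith
  have ht2 : -1 ≤ t := by
    by_contra! ht
    rcases le_or_gt 0 s with hs | hs <;> nlinarith
  omega

/-- the key computation in the proof of `prop:highSyzygyDegree`: if
`B ∈ ℤ^{n×2}` has rank 2, `ℤB` is positive, and for `1 ≤ i ≤ 4` the `i`-th row of `B`
lies in the `i`-th open quadrant (sign patterns `(+,+), (+,−), (−,+), (−,−)`), then the
only coordinatewise nonnegative elements of the fiber of `(B₁)₊ + (B₂)₊` are
`(B₁)₊ + (B₂)₊`, `(B₁)₊ + (B₂)₋`, `(B₁)₋ + (B₂)₊` and `(B₁)₋ + (B₂)₋`. -/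
theorem statement8 {n : ℕ} (hn : 4 ≤ n) (B : Matrix (Fin n) (Fin 2) ℤ)
    (hrank : B.rank = 2) (hpos : IsPositiveLattice (colSpan B))
    (h1 : 0 < B ⟨0, by omega⟩ 0 ∧ 0 < B ⟨0, by omega⟩ 1)
    (h2 : 0 < B ⟨1, by omega⟩ 0 ∧ B ⟨1, by omega⟩ 1 < 0)
    (h3 : B ⟨2, by omega⟩ 0 < 0 ∧ 0 < B ⟨2, by omega⟩ 1)
    (h4 : B ⟨3, by omega⟩ 0 < 0 ∧ B ⟨3, by omega⟩ 1 < 0) :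
    {a : Fin n → ℤ | (∀ i, 0 ≤ a i) ∧
        a - ((fun i => max (B i 0) 0) + (fun i => max (B i 1) 0)) ∈ colSpan B} =
      {((fun i => max (B i 0) 0) + (fun i => max (B i 1) 0)),
       ((fun i => max (B i 0) 0) + (fun i => max (-(B i 1)) 0)),
       ((fun i => max (-(B i 0)) 0) + (fun i => max (B i 1) 0)),
       ((fun i => max (-(B i 0)) 0) + (fun i => max (-(B i 1)) 0))} := by
  have mem_iff : ∀ v : Fin n → ℤ,
      v ∈ colSpan B ↔ ∃ s t : ℤ, ∀ i, v i = B i 0 * s + B i 1 * t := by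
    intro v
    constructor
    · rintro ⟨x, rfl⟩
      exact ⟨x 0, x 1, fun i => by simp [Matrix.mulVec, dotProduct, Fin.sum_univ_two]⟩
    · rintro ⟨s, t, h⟩
      refine ⟨![s, t], ?_⟩
      ext i
      simp [Matrix.mulVec, dotProduct, Fin.sum_univ_two, h i]
  have max_neg : ∀ z : ℤ, max (-z) 0 = max z 0 - z := by
    intro z
    omega
  ext a
  simp only [Set.mem_ofPred_eq, Set.mem_insert_iff, Set.mem_singleton_iff, mem_iff,
    Pi.sub_apply, Pi.add_apply]
  constructor
  · rintro ⟨ha, s, t, h⟩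
    have bounds := lattice_coords_bound h1 h2 h3 h4
      (s := s) (t := t)
      (by have := ha ⟨0, by omega⟩; have := h ⟨0, by omega⟩
          rw [max_eq_left h1.1.le, max_eq_left h1.2.le] at this; linarith)
      (by have := ha ⟨1, by omega⟩; have := h ⟨1, by omega⟩
          rw [max_eq_left h2.1.le, max_eq_right h2.2.le] at this; linarith)
      (by have := ha ⟨2, by omega⟩; have := h ⟨2, by omega⟩
          rw [max_eq_right h3.1.le, max_eq_left h3.2.le] at this; linarith)
      (by have := ha ⟨3, by omega⟩; have := h ⟨3, by omega⟩
          rw [max_eq_right h4.1.le, max_eq_right h4.2.le] at this; linarith)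
    obtain ⟨rfl | rfl, rfl | rfl⟩ := bounds
    · left
      ext i
      have := h i
      simp only [Pi.add_apply]
      linarith
    · right; left
      ext i
      have := h i
      simp only [Pi.add_apply, max_neg]
      linarith
    · right; right; left
      ext i
      have := h i
      simp only [Pi.add_apply, max_neg]
      linarith
    · right; right; right
      ext i
      have := h i
      simp only [Pi.add_apply, max_neg]
      linarith
  · rintro (rfl | rfl | rfl | rfl)
    · exact ⟨fun i => add_nonneg (le_max_right _ _) (le_max_right _ _), 0, 0,
        fun i => by simp⟩
    · exact ⟨fun i => add_nonneg (le_max_right _ _) (le_max_right _ _), 0, -1,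
        fun i => by simp only [Pi.add_apply, max_neg]; ring⟩
    · exact ⟨fun i => add_nonneg (le_max_right _ _) (le_max_right _ _), -1, 0,
        fun i => by simp only [Pi.add_apply, max_neg]; ring⟩
    · exact ⟨fun i => add_nonneg (le_max_right _ _) (le_max_right _ _), -1, -1,
        fun i => by simp only [Pi.add_apply, max_neg]; ring⟩
end

section
/- Let G ∈ ℤ^{n×m} be a full-rank block-diagonal matrix with diagonal blocks G_1,…,G_r, where G_i ∈ ℤ^{n_i×m_i}, and suppose ℤG is positive. Then ℤG = ℤG_1 ⊕ ⋯ ⊕ ℤG_r, every fiber C of ℤ^n/ℤG decomposes as C = C_1 × ⋯ × C_r with C_i a fiber of ℤ^{n_i}/ℤG_i, and the simplicial complex of supports satisfies Δ_C = Δ_{C_1} ⋆ Δ_{C_2} ⋆ ⋯ ⋆ Δ_{C_r}, the join of the complexes Δ_{C_i}. -/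
/-! For a block-diagonal matrix, `G *ᵥ v` is computed block by block, so a vector lies in the column
lattice exactly when each of its blocks lies in the column lattice of the corresponding block
(`mem_colSpan_blockDiagonal'`): the coefficient vectors of the blocks can be chosen independently
and glued. Fibers are cosets, so they decompose in the same way. Nonnegativity and the support of
a vector are also read off blockwise, so representatives of the blocks of a fiber witnessing faces
glue to a representative of the whole fiber, which gives the join decomposition. -/

open MvPolynomial

theorem blockDiagonal'_mulVec_apply {ι : Type*} [Fintype ι] [DecidableEq ι] {α β : ι → Type*}
    [∀ i, Fintype (β i)] (G : ∀ i, Matrix (α i) (β i) ℤ) (v : ((i : ι) × β i) → ℤ)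
    (i : ι) (x : α i) :
    (Matrix.blockDiagonal' G).mulVec v ⟨i, x⟩ = (G i).mulVec (fun y => v ⟨i, y⟩) x := by
  simp only [Matrix.mulVec, dotProduct, Fintype.sum_sigma]
  rw [Finset.sum_eq_single i]
  · simp [Matrix.blockDiagonal'_apply_eq]
  · intro j _ hj
    exact Finset.sum_eq_zero fun y _ => by
      rw [Matrix.blockDiagonal'_apply_ne G _ _ hj.symm, zero_mul]
  · simp

theorem mem_colSpan_blockDiagonal' {ι : Type*} [Fintype ι] [DecidableEq ι] {α β : ι → Type*}
    [∀ i, Fintype (β i)] (G : ∀ i, Matrix (α i) (β i) ℤ) (u : ((i : ι) × α i) → ℤ) :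
    u ∈ colSpan (Matrix.blockDiagonal' G) ↔ ∀ i, (fun x => u ⟨i, x⟩) ∈ colSpan (G i) := by
  constructor
  · rintro ⟨v, rfl⟩ i
    exact ⟨fun y => v ⟨i, y⟩, funext fun x => (blockDiagonal'_mulVec_apply G v i x).symm⟩
  · intro h
    choose v hv using h
    refine ⟨fun p => v p.1 p.2, funext fun ⟨i, x⟩ => ?_⟩
    exact (blockDiagonal'_mulVec_apply G _ i x).trans (congrFun (hv i) x)

/-- block decomposition: for a full-rank block-diagonal integer
matrix `G` with blocks `G i` and `ℤG` positive, the lattice `ℤG` is the direct sum of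
the lattices `ℤ(G i)`, every fiber decomposes as a product of fibers of the blocks, and
the complex of supports of a fiber is the join of the complexes of the factors (a face
is exactly a union of faces of the factors). -/
theorem statement10 {r : ℕ} (nn mm : Fin r → ℕ)
    (G : ∀ i, Matrix (Fin (nn i)) (Fin (mm i)) ℤ)
    (hrank : (Matrix.blockDiagonal' G).rank = ∑ i, mm i)
    (hpos : IsPositiveLattice (colSpan (Matrix.blockDiagonal' G))) :
    (∀ u : ((i : Fin r) × Fin (nn i)) → ℤ,
      u ∈ colSpan (Matrix.blockDiagonal' G) ↔
        ∀ i, (fun x => u ⟨i, x⟩) ∈ colSpan (G i)) ∧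
    (∀ c u : ((i : Fin r) × Fin (nn i)) → ℤ,
      u - c ∈ colSpan (Matrix.blockDiagonal' G) ↔
        ∀ i, (fun x => u ⟨i, x⟩ - c ⟨i, x⟩) ∈ colSpan (G i)) ∧
    ∀ (c : ((i : Fin r) × Fin (nn i)) → ℤ) (F : Finset ((i : Fin r) × Fin (nn i))),
      FaceOf (colSpan (Matrix.blockDiagonal' G)) c F ↔
        ∀ i, FaceOf (colSpan (G i)) (fun x => c ⟨i, x⟩)
          (Finset.univ.filter fun x => (⟨i, x⟩ : (i : Fin r) × Fin (nn i)) ∈ F) := by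
  refine ⟨mem_colSpan_blockDiagonal' G, fun c u => mem_colSpan_blockDiagonal' G (u - c),
    fun c F => ⟨?_, ?_⟩⟩
  · rintro ⟨a, ha, hac, haF⟩ i
    exact ⟨fun x => a ⟨i, x⟩, fun x => ha _, (mem_colSpan_blockDiagonal' G (a - c)).1 hac i,
      fun x hx => haF _ (Finset.mem_filter.1 hx).2⟩
  · intro h
    choose a ha hac haF using h
    exact ⟨fun p => a p.1 p.2, fun p => ha _ _, (mem_colSpan_blockDiagonal' G _).2 hac,
      fun p hp => haF p.1 p.2 (Finset.mem_filter.2 ⟨Finset.mem_univ _, hp⟩)⟩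
end

section
/- Let B∘ ∈ ℤ^{n×2} be of rank 2 with ℤB∘ a positive lattice and with rows meeting all four open quadrants of ℝ², let H = (1,−1)ᵀ ∈ ℤ^{2×1}, and for m > 2 let B ∈ ℤ^{(n+2(m−2))×m} be the block-diagonal matrix with blocks B∘, H, …, H (m−2 copies of H). Let C be the fiber of ℤ^{n+2(m−2)}/ℤB containing (B_1)_+ + (B_2)_+ + ⋯ + (B_m)_+, where B_1,…,B_m are the columns of B. Then β_{m+1,C}(k[x_1,…,x_{n+2(m−2)}]/I_{ℤB}) = 1; consequently the quotient by I_{ℤB} (which has codimension m) is not Cohen–Macaulay. -/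
/-!
Write `S = k[x]`, `L = ℤB` and `c = (B_1)_+ + ⋯ + (B_m)_+`.  The Betti numbers of `S/I_L` in degree
`c + L` are computed by comparing two resolutions, indexed by the poset `{a : a ≤ c}` in `ℤ^V`, of
the diagram of vector spaces `a ↦ (S/I_L)_{a + L}`.  Each of these spaces is `k` or `0`, depending
on whether there is `l ∈ L` with `l ≤ a`.

* The given minimal graded resolution, with each generator `g` replaced by one copy for every
  vector `b ≤ c` in the class `deg g`, is such a resolution (`strandResolution`): its part below
  `a` is the strand of degree `a + L`.  It is minimal because the matrices have no constant terms,
  and its basis elements labelled `c` are the generators of degree `c + L`.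
* If `B t ≤ c` then `t ∈ {0,1}^m`, by the four quadrants and by the rows of the blocks `H`
  (`IsSuspension.mem_cube`).  As `B` is block diagonal, `L` therefore looks, below `c`, like a
  product of one set of four vectors (from `B₀`) and `m - 2` sets of two vectors (from the copies
  of `H`).  Hence the product of a tetrahedron and `m - 2` segments, each vertex being labelled by
  the corresponding vector and each cell by the maximum of the labels of its vertices, supports the
  other resolution (`cellResolution`): the cells with label `≤ a` form a product of simplices, which
  is acyclic.  The product has dimension `3 + (m - 2) = m + 1`, and each vertex of it is the only
  one in its factor to attain the maximum in some coordinate, so that the top cell is the only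
  cell labelled `c`.

The usual comparison argument (`LabelledResolution.card_le`) shows that two resolutions which are
both minimal at the label `c` have the same number of basis elements labelled `c` in each positive
degree.  Thus `β_{m+1, c + L} = 1` (`betti_eq_one`, `IsSuspension.betti_eq_one`).

The columns of `B` are independent, since `B t = 0` puts both `t` and `-t` in `{0,1}^m`; hence the
rank of `L` is `m`.  Finally the minimal resolution has a generator in degree `m + 1`, so there is
no resolution of length `m`: the identity of the minimal resolution would be homotopic to a chain
map which vanishes in degree `m + 1`, and constant terms give a contradiction
(`not_hasFreeResolutionOfLength`).
-/

open MvPolynomial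

/-! ### Labelled resolutions and their comparison -/

/-- A complex of based `k`-vector spaces `⋯ → k^(X 1) → k^(X 0) → k`, whose basis elements carry
labels in a poset `P`, such that for every `a : P` the basis elements with label `≤ a` span a
subcomplex which is exact at every `k^(X j)` (the last map being the augmentation `ε`).
Equivalently: a free resolution of a `P`-indexed diagram of vector spaces, where the diagram is a
subdiagram of the constant diagram `k`. -/
structure LabelledResolution (k P : Type*) [Field k] [PartialOrder P] where
  /-- The basis in homological degree `j`. -/
  X : ℕ → Type*
  /-- The labels of the basis elements. -/
  lab : ∀ j, X j → P
  /-- The differential from degree `j + 1` to degree `j`. -/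
  d : ∀ j, (X (j + 1) →₀ k) →ₗ[k] (X j →₀ k)
  /-- The augmentation. -/
  ε : (X 0 →₀ k) →ₗ[k] k
  d_mem : ∀ j x, d j (Finsupp.single x 1) ∈ Finsupp.supported k k {y | lab j y ≤ lab (j + 1) x}
  ε_d : ∀ w, ε (d 0 w) = 0
  d_d : ∀ j w, d j (d (j + 1) w) = 0
  exact_zero : ∀ a, ∀ v ∈ Finsupp.supported k k {y | lab 0 y ≤ a}, ε v = 0 →
    ∃ w ∈ Finsupp.supported k k {y | lab 1 y ≤ a}, d 0 w = v
  exact_succ : ∀ j a, ∀ v ∈ Finsupp.supported k k {y | lab (j + 1) y ≤ a}, d j v = 0 →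
    ∃ w ∈ Finsupp.supported k k {y | lab (j + 2) y ≤ a}, d (j + 1) w = v

namespace LabelledResolution

variable {k P : Type*} [Field k] [PartialOrder P]

section Filtered

variable {X Y Z : Type*} (lX : X → P) (lY : Y → P) (lZ : Z → P)

/-- The span of the basis elements with label `≤ a`. -/
abbrev below (k : Type*) [Field k] (a : P) : Submodule k (X →₀ k) :=
  Finsupp.supported k k {x | lX x ≤ a}

/-- The span of the basis elements with label `< a`. -/
abbrev strictlyBelow (k : Type*) [Field k] (a : P) : Submodule k (X →₀ k) :=
  Finsupp.supported k k {x | lX x < a}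

/-- A linear map between based spaces that does not increase labels. -/
def Filtered (φ : (X →₀ k) →ₗ[k] (Y →₀ k)) : Prop :=
  ∀ x, φ (Finsupp.single x 1) ∈ below lY k (lX x)

variable {lX lY lZ}

lemma map_mem_of_basis {s : Set X} {N : Submodule k (Y →₀ k)} {φ : (X →₀ k) →ₗ[k] (Y →₀ k)}
    (h : ∀ x ∈ s, φ (Finsupp.single x 1) ∈ N) {v : X →₀ k} (hv : v ∈ Finsupp.supported k k s) :
    φ v ∈ N := by
  rw [Finsupp.supported_eq_span_single] at hv
  induction hv using Submodule.span_induction with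
  | mem x hx => obtain ⟨y, hy, rfl⟩ := hx; exact h y hy
  | zero => simp
  | add x y _ _ hx hy => rw [map_add]; exact N.add_mem hx hy
  | smul r x _ hx => rw [map_smul]; exact N.smul_mem r hx

lemma Filtered.map_below {φ : (X →₀ k) →ₗ[k] (Y →₀ k)} (h : Filtered lX lY φ) {a : P}
    {v : X →₀ k} (hv : v ∈ below lX k a) : φ v ∈ below lY k a :=
  map_mem_of_basis (s := {x | lX x ≤ a}) (fun x hx => Finsupp.supported_mono
    (s := {y | lY y ≤ lX x}) (t := {y | lY y ≤ a}) (fun _ hy => le_trans hy hx) (h x)) hv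

lemma Filtered.map_strictlyBelow {φ : (X →₀ k) →ₗ[k] (Y →₀ k)} (h : Filtered lX lY φ) {a : P}
    {v : X →₀ k} (hv : v ∈ strictlyBelow lX k a) : φ v ∈ strictlyBelow lY k a :=
  map_mem_of_basis (s := {x | lX x < a}) (fun x hx => Finsupp.supported_mono
    (s := {y | lY y ≤ lX x}) (t := {y | lY y < a}) (fun _ hy => lt_of_le_of_lt hy hx) (h x)) hv

lemma Filtered.comp {ψ : (Y →₀ k) →ₗ[k] (Z →₀ k)} {φ : (X →₀ k) →ₗ[k] (Y →₀ k)}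
    (hψ : Filtered lY lZ ψ) (hφ : Filtered lX lY φ) : Filtered lX lZ (ψ ∘ₗ φ) :=
  fun x => hψ.map_below (hφ x)

lemma Filtered.sub {ψ φ : (X →₀ k) →ₗ[k] (Y →₀ k)}
    (hψ : Filtered lX lY ψ) (hφ : Filtered lX lY φ) : Filtered lX lY (ψ - φ) :=
  fun x => Submodule.sub_mem _ (hψ x) (hφ x)

lemma Filtered.id : Filtered lX lX (LinearMap.id : (X →₀ k) →ₗ[k] (X →₀ k)) :=
  fun x => Finsupp.single_mem_supported k 1 (le_refl (lX x))

/-- Freeness: a map out of a based space lifts along `δ` as soon as it lifts on each basis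
element, without increasing labels. -/
lemma exists_filtered_lift {N : Type*} [AddCommGroup N] [Module k N]
    (δ : (Y →₀ k) →ₗ[k] N) (θ : (X →₀ k) →ₗ[k] N)
    (h : ∀ x, ∃ w ∈ below lY k (lX x), δ w = θ (Finsupp.single x 1)) :
    ∃ φ : (X →₀ k) →ₗ[k] (Y →₀ k), Filtered lX lY φ ∧ ∀ v, δ (φ v) = θ v := by
  choose w hw hδ using h
  refine ⟨Finsupp.linearCombination k w, fun x => by simpa using hw x, fun v => ?_⟩
  have : δ ∘ₗ Finsupp.linearCombination k w = θ := by
    ext x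
    simp [hδ]
  exact LinearMap.congr_fun this v

end Filtered

variable (R T : LabelledResolution k P)

lemma d_filtered (j : ℕ) : Filtered (R.lab (j + 1)) (R.lab j) (R.d j) := R.d_mem j

/-- The chains in degree `j` killed by the differential (by the augmentation when `j = 0`). -/
noncomputable def cycles : ∀ j, Submodule k (R.X j →₀ k)
  | 0 => LinearMap.ker R.ε
  | j + 1 => LinearMap.ker (R.d j)

lemma d_mem_cycles (j : ℕ) (w : R.X (j + 1) →₀ k) : R.d j w ∈ R.cycles j := by
  cases j with
  | zero => exact R.ε_d w
  | succ j => exact R.d_d j w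

lemma exists_d_eq (j : ℕ) (a : P) {v : R.X j →₀ k} (hv : v ∈ below (R.lab j) k a)
    (hc : v ∈ R.cycles j) : ∃ w ∈ below (R.lab (j + 1)) k a, R.d j w = v := by
  cases j with
  | zero => exact R.exact_zero a v hv hc
  | succ j => exact R.exact_succ j a v hv hc

/-- The diagram resolved by `R` is contained in the one resolved by `T`: the augmentation of every
basis element of `R` is attained by a chain of `T` below its label. -/
def AugLE : Prop :=
  ∀ x : R.X 0, ∃ v ∈ below (T.lab 0) k (R.lab 0 x), T.ε v = R.ε (Finsupp.single x 1)

variable {R T}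

/-- The comparison theorem: existence of a label-respecting chain map over the augmentations. -/
lemma exists_chainMap (h : AugLE R T) :
    ∃ φ : ∀ j, (R.X j →₀ k) →ₗ[k] (T.X j →₀ k),
      (∀ j, Filtered (R.lab j) (T.lab j) (φ j)) ∧ (∀ v, T.ε (φ 0 v) = R.ε v) ∧
      ∀ j v, T.d j (φ (j + 1) v) = φ j (R.d j v) := by
  obtain ⟨φ₀, hφ₀, hε⟩ := exists_filtered_lift (lX := R.lab 0) (lY := T.lab 0) T.ε R.ε h
  let Good : ∀ j, ((R.X j →₀ k) →ₗ[k] (T.X j →₀ k)) → Prop := fun j φ =>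
    Filtered (R.lab j) (T.lab j) φ ∧ ∀ v ∈ R.cycles j, φ v ∈ T.cycles j
  have step : ∀ j (φ : {φ // Good j φ}), ∃ φ' : {φ' // Good (j + 1) φ'},
      ∀ v, T.d j (φ'.1 v) = φ.1 (R.d j v) := by
    rintro j ⟨φ, hφ, hc⟩
    obtain ⟨φ', h1, h2⟩ := exists_filtered_lift (lX := R.lab (j + 1)) (lY := T.lab (j + 1))
      (T.d j) (φ ∘ₗ R.d j) (fun x => T.exists_d_eq j _ (hφ.map_below (R.d_mem j x))
        (hc _ (R.d_mem_cycles j _)))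
    refine ⟨⟨φ', h1, fun v hv => ?_⟩, h2⟩
    change T.d j (φ' v) = 0
    have hv : R.d j v = 0 := hv
    rw [h2, LinearMap.comp_apply, hv, map_zero]
  choose next hnext using step
  let seq : ∀ j, {φ // Good j φ} := fun j => Nat.rec
    ⟨φ₀, hφ₀, fun v hv => by
      change T.ε (φ₀ v) = 0
      rw [hε]; exact hv⟩ (fun j φ => next j φ) j
  exact ⟨fun j => (seq j).1, fun j => (seq j).2.1, hε, fun j v => hnext j (seq j) v⟩

/-- Uniqueness in the comparison theorem: a label-respecting chain map over the zero
augmentation is null-homotopic, by a label-respecting homotopy. -/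
lemma exists_homotopy (θ : ∀ j, (R.X j →₀ k) →ₗ[k] (T.X j →₀ k))
    (hθ : ∀ j, Filtered (R.lab j) (T.lab j) (θ j)) (hε : ∀ v, T.ε (θ 0 v) = 0)
    (hd : ∀ j v, T.d j (θ (j + 1) v) = θ j (R.d j v)) :
    ∃ h : ∀ j, (R.X j →₀ k) →ₗ[k] (T.X (j + 1) →₀ k),
      (∀ j, Filtered (R.lab j) (T.lab (j + 1)) (h j)) ∧
      ∀ j v, θ (j + 1) v = T.d (j + 1) (h (j + 1) v) + h j (R.d j v) := by
  obtain ⟨h₀, hh₀, hd₀⟩ := exists_filtered_lift (lX := R.lab 0) (lY := T.lab 1) (T.d 0) (θ 0)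
    (fun x => T.exists_d_eq 0 _ (hθ 0 x) (hε _))
  let Good : ∀ j, ((R.X j →₀ k) →ₗ[k] (T.X (j + 1) →₀ k)) → Prop := fun j h =>
    Filtered (R.lab j) (T.lab (j + 1)) h ∧ ∀ w, T.d j (h (R.d j w)) = θ j (R.d j w)
  have step : ∀ j (h : {h // Good j h}), ∃ h' : {h' // Good (j + 1) h'},
      ∀ v, T.d (j + 1) (h'.1 v) = θ (j + 1) v - h.1 (R.d j v) := by
    rintro j ⟨h, hh, hc⟩
    obtain ⟨h', h1, h2⟩ := exists_filtered_lift (lX := R.lab (j + 1)) (lY := T.lab (j + 2))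
      (T.d (j + 1)) (θ (j + 1) - h ∘ₗ R.d j) (fun x => T.exists_d_eq (j + 1) _
        ((hθ (j + 1)).sub (hh.comp (R.d_filtered j)) x) (by
          change T.d j _ = 0
          simp [hd, hc]))
    refine ⟨⟨h', h1, fun w => ?_⟩, h2⟩
    simp [h2, R.d_d]
  choose next hnext using step
  let seq : ∀ j, {h // Good j h} := fun j => Nat.rec
    ⟨h₀, hh₀, fun w => hd₀ _⟩ (fun j h => next j h) j
  refine ⟨fun j => (seq j).1, fun j => (seq j).2.1, fun j v => ?_⟩
  have := hnext j (seq j) v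
  change T.d (j + 1) ((seq (j + 1)).1 v) = _ at this
  rw [this, sub_add_cancel]

variable (R) in
/-- Minimality at the label `c`: the differential has no nonzero entry between two basis
elements both labelled `c`. -/
def MinimalAt (c : P) : Prop :=
  ∀ j x y, R.lab (j + 1) x = c → R.lab j y = c → R.d j (Finsupp.single x 1) y = 0

lemma MinimalAt.d_mem {c : P} (h : MinimalAt R c) (j : ℕ) {v : R.X (j + 1) →₀ k}
    (hv : v ∈ below (R.lab (j + 1)) k c) : R.d j v ∈ strictlyBelow (R.lab j) k c := by
  refine map_mem_of_basis (fun x hx => ?_) hv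
  have hx' : R.lab (j + 1) x ≤ c := hx
  rw [Finsupp.mem_supported]
  intro y hy
  have hy' := (Finsupp.mem_supported k _).1 (R.d_mem j x) hy
  have hy'' : R.lab j y ≤ R.lab (j + 1) x := hy'
  refine lt_of_le_of_ne (hy''.trans hx') fun hyc => ?_
  have hxc : R.lab (j + 1) x = c := le_antisymm hx' (hyc ▸ hy'')
  exact (Finsupp.mem_support_iff.1 hy) (h j x y hxc hyc)

/-- A resolution that is minimal at `c` has, in each positive degree, at most as many basis
elements labelled `c` as any other resolution of the same diagram: the composite of comparison maps
`R → T → R` is homotopic to the identity, hence equal to it modulo labels `< c`. -/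
theorem card_le (h₁ : AugLE R T) (h₂ : AugLE T R) {c : P} (hmin : MinimalAt R c) (j : ℕ)
    [Finite {x : R.X (j + 1) // R.lab (j + 1) x = c}]
    [Finite {y : T.X (j + 1) // T.lab (j + 1) y = c}] :
    Nat.card {x : R.X (j + 1) // R.lab (j + 1) x = c} ≤
      Nat.card {y : T.X (j + 1) // T.lab (j + 1) y = c} := by
  obtain ⟨φ, hφ, hφε, hφd⟩ := exists_chainMap h₁
  obtain ⟨ψ, hψ, hψε, hψd⟩ := exists_chainMap h₂
  obtain ⟨h, hh, hhd⟩ := exists_homotopy (R := R) (T := R)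
    (fun j => ψ j ∘ₗ φ j - LinearMap.id) (fun j => ((hψ j).comp (hφ j)).sub Filtered.id)
    (fun v => by simp [hψε, hφε]) (fun j v => by simp [hψd, hφd])
  let ι : ({x : R.X (j + 1) // R.lab (j + 1) x = c} →₀ k) →ₗ[k] (R.X (j + 1) →₀ k) :=
    Finsupp.lmapDomain k k Subtype.val
  let ρ : (T.X (j + 1) →₀ k) →ₗ[k] ({y : T.X (j + 1) // T.lab (j + 1) y = c} →₀ k) :=
    Finsupp.lsubtypeDomain {y : T.X (j + 1) | T.lab (j + 1) y = c}
  have hι : ∀ v x, ι v x.1 = v x := fun v x =>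
    Finsupp.mapDomain_apply Subtype.val_injective v x
  have inj : Function.Injective (ρ ∘ₗ φ (j + 1) ∘ₗ ι) := by
    rw [← LinearMap.ker_eq_bot, LinearMap.ker_eq_bot']
    intro v hv
    have hιv : ι v ∈ below (R.lab (j + 1)) k c := by
      rw [Finsupp.mem_supported]
      intro x hx
      classical
      have := Finsupp.mapDomain_support (f := Subtype.val) (s := v) hx
      obtain ⟨y, -, rfl⟩ := Finset.mem_image.1 this
      exact y.2.le
    have hφv : φ (j + 1) (ι v) ∈ strictlyBelow (T.lab (j + 1)) k c := by
      rw [Finsupp.mem_supported]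
      intro y hy
      refine lt_of_le_of_ne ((Finsupp.mem_supported k _).1 ((hφ _).map_below hιv) hy) fun hyc => ?_
      have := DFunLike.congr_fun hv ⟨y, hyc⟩
      exact (Finsupp.mem_support_iff.1 hy) this
    have key : ι v ∈ strictlyBelow (R.lab (j + 1)) k c := by
      have e := hhd j (ι v)
      have e' : ι v = ψ (j + 1) (φ (j + 1) (ι v)) -
          (R.d (j + 1) (h (j + 1) (ι v)) + h j (R.d j (ι v))) := by
        rw [← e]; simp
      rw [e']
      refine Submodule.sub_mem _ ((hψ _).map_strictlyBelow hφv) (Submodule.add_mem _ ?_ ?_)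
      · exact hmin.d_mem _ ((hh _).map_below hιv)
      · exact (hh _).map_strictlyBelow (hmin.d_mem _ hιv)
    ext x
    by_contra hx
    have : x.1 ∈ (ι v).support := by rw [Finsupp.mem_support_iff, hι]; exact hx
    have := (Finsupp.mem_supported k _).1 key this
    exact absurd x.2 (ne_of_lt this)
  have := Fintype.ofFinite {x : R.X (j + 1) // R.lab (j + 1) x = c}
  have := Fintype.ofFinite {y : T.X (j + 1) // T.lab (j + 1) y = c}
  have hle := LinearMap.finrank_le_finrank_of_injective inj
  rwa [Module.finrank_finsupp_self, Module.finrank_finsupp_self, ← Nat.card_eq_fintype_card,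
    ← Nat.card_eq_fintype_card] at hle

end LabelledResolution

/-! ### Products of simplices -/

section ProductOfSimplices

variable {E ι : Type*} [LinearOrder E] (k : Type*) [Field k]

/-- The sign `(-1)^{#{y ∈ F : y < x}}` of the vertex `x` relative to `F`. -/
def simplexSign (F : Finset E) (x : E) : k := (-1) ^ (F.filter (· < x)).card

/-- The (augmented) simplicial boundary map on chains on all finite subsets of `E`. -/
noncomputable def simplexBoundary : (Finset E →₀ k) →ₗ[k] (Finset E →₀ k) :=
  Finsupp.linearCombination k fun F =>
    ∑ x ∈ F, Finsupp.single (F.erase x) (simplexSign k F x)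

/-- The cone operator `F ↦ ± (F ∪ {e})`, zero if `e ∈ F`. -/
noncomputable def simplexCone (e : E) : (Finset E →₀ k) →ₗ[k] (Finset E →₀ k) :=
  Finsupp.linearCombination k fun F =>
    if e ∈ F then 0 else Finsupp.single (insert e F) (simplexSign k F e)

lemma simplexBoundary_single (F : Finset E) :
    simplexBoundary k (Finsupp.single F 1) =
      ∑ x ∈ F, Finsupp.single (F.erase x) (simplexSign k F x) := by
  simp [simplexBoundary]

lemma simplexCone_single (e : E) (F : Finset E) (r : k) :
    simplexCone k e (Finsupp.single F r) =
      if e ∈ F then 0 else Finsupp.single (insert e F) (r * simplexSign k F e) := by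
  simp [simplexCone]

lemma simplexSign_mul_self (F : Finset E) (x : E) :
    simplexSign k F x * simplexSign k F x = 1 := by
  rw [simplexSign, ← mul_pow]; simp

lemma simplexSign_erase_self (F : Finset E) (x : E) :
    simplexSign k (F.erase x) x = simplexSign k F x := by
  unfold simplexSign; congr 2; ext y; simp only [Finset.mem_filter, Finset.mem_erase]
  constructor
  · rintro ⟨⟨_, h⟩, h'⟩; exact ⟨h, h'⟩
  · rintro ⟨h, h'⟩; exact ⟨⟨h'.ne, h⟩, h'⟩

lemma simplexSign_insert_self (F : Finset E) (x : E) :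
    simplexSign k (insert x F) x = simplexSign k F x := by
  unfold simplexSign; congr 2; ext y; simp [Finset.filter_insert]

lemma simplexSign_insert_of_lt {F : Finset E} {x e : E} (he : e ∉ F) (h : e < x) :
    simplexSign k (insert e F) x = - simplexSign k F x := by
  unfold simplexSign
  rw [Finset.filter_insert, if_pos h, Finset.card_insert_of_notMem (by simp [he]), pow_succ]
  ring

lemma simplexSign_insert_of_gt {F : Finset E} {x e : E} (h : x < e) :
    simplexSign k (insert e F) x = simplexSign k F x := by
  unfold simplexSign
  rw [Finset.filter_insert, if_neg (not_lt.2 h.le)]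

/-- The cone operator is a contracting homotopy of the full simplex. -/
lemma cone_boundary_add (e : E) (v : Finset E →₀ k) :
    simplexCone k e (simplexBoundary k v) + simplexBoundary k (simplexCone k e v) = v := by
  suffices h : simplexCone k e ∘ₗ simplexBoundary k + simplexBoundary k ∘ₗ simplexCone k e =
      LinearMap.id from LinearMap.congr_fun h v
  refine Finsupp.lhom_ext' fun F => LinearMap.ext_ring ?_
  simp only [LinearMap.comp_apply, LinearMap.add_apply, Finsupp.lsingle_apply, LinearMap.id_apply,
    simplexBoundary_single, map_sum, simplexCone_single, one_mul]
  by_cases he : e ∈ F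
  · rw [if_pos he, map_zero, add_zero, Finset.sum_eq_single e]
    · rw [if_neg (by simp), Finset.insert_erase he, simplexSign_erase_self, simplexSign_mul_self]
    · intro x _ hx
      rw [if_pos (by simp [he, hx.symm])]
    · exact fun h => absurd he h
  · rw [if_neg he, ← mul_one (simplexSign k F e), ← smul_eq_mul (simplexSign k F e) 1,
      ← Finsupp.smul_single, map_smul, simplexBoundary_single, Finset.sum_insert he, smul_add,
      Finsupp.smul_single, smul_eq_mul, simplexSign_insert_self, simplexSign_mul_self,
      Finset.erase_insert he, add_left_comm, Finset.smul_sum, ← Finset.sum_add_distrib,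
      Finset.sum_eq_zero, add_zero]
    intro x hx
    have hxe : x ≠ e := fun h => he (h ▸ hx)
    rw [if_neg (by simp [he]), Finsupp.smul_single, smul_eq_mul,
      Finset.erase_insert_of_ne hxe.symm, ← Finsupp.single_add]
    have hF : insert x (F.erase x) = F := Finset.insert_erase hx
    have hins : simplexSign k F e = simplexSign k (insert x (F.erase x)) e := by rw [hF]
    have hz : simplexSign k F x * simplexSign k (F.erase x) e +
        simplexSign k F e * (simplexSign k (insert e F) x * 1) = 0 := by
      rw [hins]
      rcases lt_or_gt_of_ne hxe with h | h
      · rw [simplexSign_insert_of_gt k h, simplexSign_insert_of_lt k (by simp) h]; ring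
      · rw [simplexSign_insert_of_lt k he h, simplexSign_insert_of_gt k h]; ring
    rw [mul_one] at hz
    rw [hz, Finsupp.single_zero]

lemma boundary_boundary (v : Finset E →₀ k) :
    simplexBoundary k (simplexBoundary k v) = 0 := by
  suffices h : simplexBoundary k ∘ₗ simplexBoundary k =
      (0 : (Finset E →₀ k) →ₗ[k] (Finset E →₀ k)) from LinearMap.congr_fun h v
  refine Finsupp.lhom_ext' fun F => LinearMap.ext_ring ?_
  simp only [LinearMap.comp_apply, Finsupp.lsingle_apply, LinearMap.zero_apply]
  -- the square of the boundary commutes with all cone operators, which generate everything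
  -- from the empty simplex
  induction F using Finset.induction_on with
  | empty => simp [simplexBoundary_single]
  | insert e F he ih =>
    have h1 : Finsupp.single (insert e F) (1 : k) =
        simplexSign k F e • simplexCone k e (Finsupp.single F 1) := by
      rw [simplexCone_single, if_neg he, Finsupp.smul_single, one_mul, smul_eq_mul,
        simplexSign_mul_self]
    have h2 := cone_boundary_add k e (Finsupp.single F 1)
    have h3 := cone_boundary_add k e (simplexBoundary k (Finsupp.single F 1))
    rw [ih, map_zero, zero_add] at h3
    have h4 : simplexBoundary k (simplexBoundary k (simplexCone k e (Finsupp.single F 1))) = 0 := by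
      rw [← add_right_inj (simplexBoundary k
        (simplexCone k e (simplexBoundary k (Finsupp.single F 1)))), ← map_add, h2, h3, add_zero]
    rw [h1, map_smul, map_smul, h4, smul_zero]

variable (block : E → ι)

/-- `F` meets every block. Such an `F` stands for the cell `∏ᵢ (F ∩ block i)` of a product of
simplices, one simplex for each block. -/
def MeetsBlocks (F : Finset E) : Prop := ∀ i, ∃ e ∈ F, block e = i

variable {block}

lemma MeetsBlocks.mono {F G : Finset E} (h : MeetsBlocks block F) (hFG : F ⊆ G) :
    MeetsBlocks block G := fun i => by
  obtain ⟨e, he, hi⟩ := h i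
  exact ⟨e, hFG he, hi⟩

lemma MeetsBlocks.card_le [Fintype ι] {F : Finset E} (h : MeetsBlocks block F) :
    Fintype.card ι ≤ F.card := by
  classical
  have : (Finset.univ : Finset ι) ⊆ F.image block := fun i _ => by
    obtain ⟨e, he, hi⟩ := h i
    exact Finset.mem_image.2 ⟨e, he, hi⟩
  exact (Finset.card_le_card this).trans Finset.card_image_le

variable (block)

open Classical in
/-- The projection of chains onto those simplices that meet every block. -/
noncomputable def blockProj : (Finset E →₀ k) →ₗ[k] (Finset E →₀ k) :=
  Finsupp.linearCombination k fun F => if MeetsBlocks block F then Finsupp.single F 1 else 0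

lemma blockProj_single_pos {F : Finset E} (h : MeetsBlocks block F) (r : k) :
    blockProj k block (Finsupp.single F r) = Finsupp.single F r := by
  simp [blockProj, h]

lemma blockProj_single_neg {F : Finset E} (h : ¬ MeetsBlocks block F) (r : k) :
    blockProj k block (Finsupp.single F r) = 0 := by
  simp [blockProj, h]

lemma blockProj_boundary_blockProj (v : Finset E →₀ k) :
    blockProj k block (simplexBoundary k (blockProj k block v)) =
      blockProj k block (simplexBoundary k v) := by
  suffices h : blockProj k block ∘ₗ simplexBoundary k ∘ₗ blockProj k block =
      blockProj k block ∘ₗ simplexBoundary k from LinearMap.congr_fun h v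
  refine Finsupp.lhom_ext' fun F => LinearMap.ext_ring ?_
  simp only [LinearMap.comp_apply, Finsupp.lsingle_apply]
  by_cases hF : MeetsBlocks block F
  · rw [blockProj_single_pos _ _ hF]
  · rw [blockProj_single_neg _ _ hF, map_zero, map_zero, simplexBoundary_single, map_sum]
    refine (Finset.sum_eq_zero fun x _ => blockProj_single_neg _ _ (fun h => hF ?_) _).symm
    exact h.mono (Finset.erase_subset _ _)

lemma mem_of_basis {X M : Type*} [AddCommGroup M] [Module k M] {s : Set X}
    {N : Submodule k M} {φ : (X →₀ k) →ₗ[k] M}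
    (h : ∀ x ∈ s, φ (Finsupp.single x 1) ∈ N) {v : X →₀ k} (hv : v ∈ Finsupp.supported k k s) :
    φ v ∈ N := by
  rw [Finsupp.supported_eq_span_single] at hv
  induction hv using Submodule.span_induction with
  | mem x hx => obtain ⟨y, hy, rfl⟩ := hx; exact h y hy
  | zero => simp
  | add x y _ _ hx hy => rw [map_add]; exact N.add_mem hx hy
  | smul r x _ hx => rw [map_smul]; exact N.smul_mem r hx

lemma single_mem_supp {X : Type*} {s : Set X} {x : X} (h : x ∈ s) (r : k) :
    Finsupp.single x r ∈ Finsupp.supported k k s := Finsupp.single_mem_supported k r h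

/-- The simplices that meet every block, have all vertices in `A`, have `N` vertices, and meet
the `i`-th block only in `b i` for each `i ∈ J`. -/
def cellSet (A : Set E) (N : ℕ) (b : ι → E) (J : Finset ι) : Set (Finset E) :=
  {F | MeetsBlocks block F ∧ (F : Set E) ⊆ A ∧ F.card = N ∧
    ∀ x ∈ F, block x ∈ J → x = b (block x)}

/-- Pushing a relative cycle towards the base point `b i`: up to a boundary it becomes
supported on cells that meet the `i`-th block only in `b i`. -/
lemma normalize_step [DecidableEq ι] {A : Set E} {N : ℕ} {b : ι → E} (hb : ∀ i, block (b i) = i)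
    (hA : ∀ i, b i ∈ A) {J : Finset ι} {v : Finset E →₀ k}
    (hv : v ∈ Finsupp.supported k k (cellSet block A N b J))
    (hd : blockProj k block (simplexBoundary k v) = 0) (i : ι) :
    ∃ w ∈ Finsupp.supported k k (cellSet block A (N + 1) b ∅),
      v - blockProj k block (simplexBoundary k w) ∈
        Finsupp.supported k k (cellSet block A N b (insert i J)) := by
  refine ⟨simplexCone k (b i) v, ?_, ?_⟩
  · refine mem_of_basis k (fun F hF => ?_) hv
    obtain ⟨h1, h2, h3, -⟩ := hF
    rw [simplexCone_single]
    split_ifs with he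
    · exact Submodule.zero_mem _
    · refine single_mem_supp k (s := cellSet block A (N + 1) b ∅)
        ⟨h1.mono (Finset.subset_insert _ _), ?_, ?_, by simp⟩ _
      · rw [Finset.coe_insert]; exact Set.insert_subset (hA i) h2
      · rw [Finset.card_insert_of_notMem he, h3]
  -- The difference is `(q κ - κ q) ∂ v`, with `q` the projection and `κ` the cone operator; a
  -- simplex contributes to it only if it misses the `i`-th block before coning.
  · have hqv : blockProj k block v = v := by
      have : blockProj k block v - v = 0 := by
        have := mem_of_basis k (φ := blockProj k block - LinearMap.id) (N := ⊥)
          (fun F hF => ?_) hv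
        · simpa using this
        · simp [blockProj_single_pos _ _ hF.1]
      exact sub_eq_zero.1 this
    have e1 : v - blockProj k block (simplexBoundary k (simplexCone k (b i) v)) =
        ((blockProj k block ∘ₗ simplexCone k (b i) - simplexCone k (b i) ∘ₗ blockProj k block) ∘ₗ
          simplexBoundary k) v := by
      have h := congrArg (blockProj k block) (cone_boundary_add k (b i) v)
      rw [map_add, hqv] at h
      simp only [LinearMap.comp_apply, LinearMap.sub_apply, hd, map_zero, sub_zero]
      nth_rewrite 1 [← h]
      abel
    rw [e1]
    refine mem_of_basis k (fun F hF => ?_) hv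
    obtain ⟨h1, h2, h3, h4⟩ := hF
    rw [LinearMap.comp_apply, simplexBoundary_single, map_sum]
    refine Submodule.sum_mem _ fun x hx => ?_
    simp only [LinearMap.sub_apply, LinearMap.comp_apply]
    by_cases hfull : MeetsBlocks block (F.erase x)
    · rw [blockProj_single_pos _ _ hfull, simplexCone_single]
      split_ifs with he
      · simp
      · rw [blockProj_single_pos _ _ (hfull.mono (Finset.subset_insert _ _)), sub_self]
        exact Submodule.zero_mem _
    · rw [blockProj_single_neg _ _ hfull, map_zero, sub_zero, simplexCone_single]
      split_ifs with he
      · simp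
      · by_cases hfull' : MeetsBlocks block (insert (b i) (F.erase x))
        · rw [blockProj_single_pos _ _ hfull']
          refine single_mem_supp k (s := cellSet block A N b (insert i J)) ⟨hfull', ?_, ?_, ?_⟩ _
          · rw [Finset.coe_insert]
            refine Set.insert_subset (hA i) fun y hy => h2 ?_
            exact Finset.mem_of_mem_erase hy
          · rw [Finset.card_insert_of_notMem he, Finset.card_erase_add_one hx, h3]
          · intro y hy hyJ
            rcases Finset.mem_insert.1 hy with rfl | hy'
            · rw [hb]
            · rcases Finset.mem_insert.1 hyJ with hyi | hyJ
              · exfalso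
                apply hfull
                intro i'
                obtain ⟨z, hz, hzi⟩ := hfull' i'
                rcases Finset.mem_insert.1 hz with rfl | hz
                · exact ⟨y, hy', by rw [hyi, ← hzi, hb]⟩
                · exact ⟨z, hz, hzi⟩
              · exact h4 y (Finset.mem_of_mem_erase hy') hyJ
        · rw [blockProj_single_neg _ _ hfull']
          exact Submodule.zero_mem _

/-- Iterating `normalize_step` over the blocks in `J`. -/
lemma normalize_cycle [DecidableEq ι] {A : Set E} {N : ℕ} {b : ι → E} (hb : ∀ i, block (b i) = i)
    (hA : ∀ i, b i ∈ A) {v : Finset E →₀ k}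
    (hv : v ∈ Finsupp.supported k k (cellSet block A N b ∅))
    (hd : blockProj k block (simplexBoundary k v) = 0) (J : Finset ι) :
    ∃ w ∈ Finsupp.supported k k (cellSet block A (N + 1) b ∅),
      v - blockProj k block (simplexBoundary k w) ∈
        Finsupp.supported k k (cellSet block A N b J) := by
  induction J using Finset.induction_on with
  | empty => exact ⟨0, Submodule.zero_mem _, by simpa using hv⟩
  | insert i J _ ih =>
    obtain ⟨w, hw, hvw⟩ := ih
    obtain ⟨w', hw', hvw'⟩ := normalize_step k block hb hA hvw (by
      rw [map_sub, map_sub, hd, blockProj_boundary_blockProj, boundary_boundary]; simp) i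
    refine ⟨w + w', Submodule.add_mem _ hw hw', ?_⟩
    rwa [map_add, map_add, ← sub_sub]

/-- The sum of the coefficients of a chain. -/
noncomputable def coeffSum : (Finset E →₀ k) →ₗ[k] k :=
  Finsupp.linearCombination k fun _ => (1 : k)

/-- The coefficient sum is an augmentation: a one-dimensional cell is an edge in one block and a
point in every other block, and its two endpoints occur with opposite signs because blocks are
intervals. -/
lemma coeffSum_boundary [Fintype ι] [PartialOrder ι] (hmono : Monotone block) {F : Finset E}
    (hF : MeetsBlocks block F) (hc : F.card = Fintype.card ι + 1) :
    coeffSum k (blockProj k block (simplexBoundary k (Finsupp.single F 1))) = 0 := by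
  classical
  obtain ⟨x, hx, y, hy, hxy, hbxy⟩ :=
    Finset.exists_ne_map_eq_of_card_lt_of_maps_to (s := F) (t := Finset.univ) (f := block)
      (by rw [hc, Finset.card_univ]; omega) (fun _ _ => Finset.mem_coe.2 (Finset.mem_univ _))
  wlog hlt : x < y generalizing x y
  · exact this y hy x hx hxy.symm hbxy.symm (lt_of_le_of_ne (not_lt.1 hlt) hxy.symm)
  have full_erase : ∀ u ∈ F, ∀ w ∈ F, u ≠ w → block u = block w →
      MeetsBlocks block (F.erase u) := by
    intro u _ w hw huw hbuw i
    obtain ⟨z, hz, rfl⟩ := hF i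
    by_cases hzu : z = u
    · exact ⟨w, Finset.mem_erase.2 ⟨huw.symm, hw⟩, by rw [hzu, hbuw]⟩
    · exact ⟨z, Finset.mem_erase.2 ⟨hzu, hz⟩, rfl⟩
  -- after removing one of two vertices in the same block, one vertex per block remains
  have inj : ∀ u ∈ F, MeetsBlocks block (F.erase u) → Set.InjOn block (F.erase u : Finset E) := by
    intro u hu h
    have h1 : (F.erase u).card = Fintype.card ι := by
      rw [Finset.card_erase_of_mem hu, hc]; rfl
    have h2 : (F.erase u).image block = Finset.univ := Finset.eq_univ_iff_forall.2 fun i => by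
      obtain ⟨e, he, hi⟩ := h i
      exact Finset.mem_image.2 ⟨e, he, hi⟩
    exact Finset.card_image_iff.1 (by rw [h2, h1, Finset.card_univ])
  have injx := inj x hx (full_erase x hx y hy hxy hbxy)
  have injy := inj y hy (full_erase y hy x hx hxy.symm hbxy.symm)
  have hsign : simplexSign k F y = - simplexSign k F x := by
    have hfil : F.filter (· < y) = insert x (F.filter (· < x)) := by
      ext z
      simp only [Finset.mem_filter, Finset.mem_insert]
      constructor
      · rintro ⟨hz, hzy⟩
        by_contra hcon
        push Not at hcon
        have hxz : x < z := lt_of_le_of_ne (hcon.2 hz) (Ne.symm hcon.1)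
        have hbz : block z = block y := le_antisymm (hmono hzy.le) (hbxy ▸ hmono hxz.le)
        exact hzy.ne (injx (by simp [hz, hcon.1]) (by simp [hy, hxy.symm]) hbz)
      · rintro (rfl | ⟨hz, hzx⟩)
        · exact ⟨hx, hlt⟩
        · exact ⟨hz, hzx.trans hlt⟩
    unfold simplexSign
    rw [hfil, Finset.card_insert_of_notMem (by simp), pow_succ]
    ring
  rw [simplexBoundary_single, map_sum, map_sum,
    Finset.sum_eq_add_of_mem x y hx hy hxy]
  · rw [blockProj_single_pos _ _ (full_erase x hx y hy hxy hbxy),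
      blockProj_single_pos _ _ (full_erase y hy x hx hxy.symm hbxy.symm), hsign]
    simp [coeffSum]
  · rintro z hz ⟨hzx, hzy⟩
    rw [blockProj_single_neg, map_zero]
    intro h
    obtain ⟨z', hz', hzz'⟩ := h (block z)
    have hz'F := Finset.mem_of_mem_erase hz'
    have hne : z' ≠ z := Finset.ne_of_mem_erase hz'
    by_cases hz'x : z' = x
    · exact hne (injy (by simp [hz'x, hx, hxy]) (by simp [hz, hzy]) hzz')
    · exact hne (injx (by simp [hz'F, hz'x]) (by simp [hz, hzx]) hzz')

end ProductOfSimplices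

/-! ### The cellular resolution of a product of simplices -/

section CellResolution

variable {E ι : Type*} [LinearOrder E] [Fintype ι] (k : Type*) [Field k] (block : E → ι)

/-- The `j`-dimensional cells of the product of simplices. -/
abbrev Cell (j : ℕ) : Type _ := {F : Finset E // MeetsBlocks block F ∧ F.card = j + Fintype.card ι}

/-- Cellular chains as simplicial chains. -/
noncomputable def cellInc (j : ℕ) : (Cell block j →₀ k) →ₗ[k] (Finset E →₀ k) :=
  Finsupp.lmapDomain k k Subtype.val

/-- The cellular part of a simplicial chain. -/
noncomputable def cellRes (j : ℕ) : (Finset E →₀ k) →ₗ[k] (Cell block j →₀ k) :=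
  Finsupp.lsubtypeDomain {F : Finset E | MeetsBlocks block F ∧ F.card = j + Fintype.card ι}

lemma cellInc_single (j : ℕ) (x : Cell block j) (r : k) :
    cellInc k block j (Finsupp.single x r) = Finsupp.single x.1 r := by
  simp [cellInc]

lemma cellRes_apply (j : ℕ) (u : Finset E →₀ k) (x : Cell block j) :
    cellRes k block j u x = u x.1 := rfl

lemma cellInc_injective (j : ℕ) : Function.Injective (cellInc k block j) :=
  Finsupp.mapDomain_injective Subtype.val_injective

lemma cellInc_cellRes (j : ℕ) {u : Finset E →₀ k}
    (hu : u ∈ Finsupp.supported k k {F : Finset E | F.card = j + Fintype.card ι}) :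
    cellInc k block j (cellRes k block j u) = blockProj k block u := by
  have := mem_of_basis k (φ := cellInc k block j ∘ₗ cellRes k block j - blockProj k block) (N := ⊥)
    (fun F hF => ?_) hu
  · exact sub_eq_zero.1 (by simpa using this)
  · have hF : F.card = j + Fintype.card ι := hF
    simp only [LinearMap.sub_apply, LinearMap.comp_apply, Submodule.mem_bot, sub_eq_zero]
    by_cases h : MeetsBlocks block F
    · have : cellRes k block j (Finsupp.single F 1) = Finsupp.single ⟨F, h, hF⟩ 1 := by
        ext x
        rw [cellRes_apply, Finsupp.single_apply, Finsupp.single_apply]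
        simp [Subtype.ext_iff]
      rw [this, cellInc_single, blockProj_single_pos _ _ h]
    · have : cellRes k block j (Finsupp.single F 1) = 0 := by
        ext x
        rw [cellRes_apply, Finsupp.single_apply, if_neg, Finsupp.zero_apply]
        exact fun hx => h (hx ▸ x.2.1)
      rw [this, map_zero, blockProj_single_neg _ _ h]

lemma boundary_card {N : ℕ} {u : Finset E →₀ k}
    (hu : u ∈ Finsupp.supported k k {F : Finset E | F.card = N + 1}) :
    simplexBoundary k u ∈ Finsupp.supported k k {F : Finset E | F.card = N} := by
  refine mem_of_basis k (fun F hF => ?_) hu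
  have hF : F.card = N + 1 := hF
  rw [simplexBoundary_single]
  refine Submodule.sum_mem _ fun x hx => single_mem_supp k ?_ _
  rw [Set.mem_ofPred, Finset.card_erase_of_mem hx, hF]
  rfl

lemma cellInc_mem {j : ℕ} {s : Set (Finset E)} {v : Cell block j →₀ k}
    (hv : v ∈ Finsupp.supported k k {x : Cell block j | x.1 ∈ s}) :
    cellInc k block j v ∈ Finsupp.supported k k s := by
  refine mem_of_basis k (fun x hx => ?_) hv
  rw [cellInc_single]
  exact single_mem_supp k (s := s) hx _

lemma supp_mono {X : Type*} {s t : Set X} {v : X →₀ k} (hv : v ∈ Finsupp.supported k k s)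
    (h : ∀ x ∈ s, x ∈ t) : v ∈ Finsupp.supported k k t := Finsupp.supported_mono h hv

lemma cellInc_card {j : ℕ} (v : Cell block j →₀ k) :
    cellInc k block j v ∈ Finsupp.supported k k {F : Finset E | F.card = j + Fintype.card ι} :=
  cellInc_mem k block ((Finsupp.mem_supported k _).2 fun x _ => x.2.2)

/-- The cellular boundary map. -/
noncomputable def cellBoundary (j : ℕ) : (Cell block (j + 1) →₀ k) →ₗ[k] (Cell block j →₀ k) :=
  cellRes k block j ∘ₗ simplexBoundary k ∘ₗ cellInc k block (j + 1)

lemma cellInc_cellBoundary (j : ℕ) (v : Cell block (j + 1) →₀ k) :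
    cellInc k block j (cellBoundary k block j v) =
      blockProj k block (simplexBoundary k (cellInc k block (j + 1) v)) := by
  refine cellInc_cellRes k block j (boundary_card k ?_)
  have := cellInc_card k block v
  rwa [add_right_comm] at this

lemma cellBoundary_single_apply_ne {j : ℕ} {x : Cell block (j + 1)} {y : Cell block j}
    (h : cellBoundary k block j (Finsupp.single x 1) y ≠ 0) : y.1 ⊆ x.1 := by
  have h' : simplexBoundary k (Finsupp.single x.1 1) y.1 ≠ 0 := by
    simpa [cellBoundary, cellInc_single, cellRes_apply] using h
  have hm : simplexBoundary k (Finsupp.single x.1 1) ∈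
      Finsupp.supported k k {F : Finset E | F ⊆ x.1} := by
    rw [simplexBoundary_single]
    exact Submodule.sum_mem _ fun e _ => single_mem_supp k
      (s := {F : Finset E | F ⊆ x.1}) (Finset.erase_subset _ _) _
  exact (Finsupp.mem_supported k _).1 hm (Finsupp.mem_support_iff.2 h')

lemma coeffSum_cell [PartialOrder ι] (hmono : Monotone block) {w : Finset E →₀ k}
    (hw : w ∈ Finsupp.supported k k
      {F : Finset E | MeetsBlocks block F ∧ F.card = Fintype.card ι + 1}) :
    coeffSum k (blockProj k block (simplexBoundary k w)) = 0 := by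
  have := mem_of_basis k (φ := coeffSum k ∘ₗ blockProj k block ∘ₗ simplexBoundary k) (N := ⊥)
    (fun F hF => ?_) hw
  · simpa using this
  · simpa using coeffSum_boundary k block hmono hF.1 hF.2

/-- The cells with vertices in `A` form an acyclic complex: either `A` misses a block and there
are no such cells, or they form a product of nonempty simplices. -/
lemma cell_exact [PartialOrder ι] (hmono : Monotone block) (A : Set E) (j : ℕ)
    {v : Cell block j →₀ k}
    (hv : v ∈ Finsupp.supported k k {x : Cell block j | (x.1 : Set E) ⊆ A})
    (hd : blockProj k block (simplexBoundary k (cellInc k block j v)) = 0)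
    (hε : j = 0 → coeffSum k (cellInc k block j v) = 0) :
    ∃ w ∈ Finsupp.supported k k {x : Cell block (j + 1) | (x.1 : Set E) ⊆ A},
      cellBoundary k block j w = v := by
  classical
  by_cases hne : ∀ i, ∃ e ∈ A, block e = i
  swap
  · refine ⟨0, Submodule.zero_mem _, ?_⟩
    rw [map_zero]
    ext x
    by_contra hx
    refine hne fun i => ?_
    obtain ⟨e, he, hi⟩ := x.2.1 i
    exact ⟨e, (Finsupp.mem_supported k _).1 hv (Finsupp.mem_support_iff.2 (Ne.symm hx)) he, hi⟩
  choose b hbA hb using hne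
  have hv' : cellInc k block j v ∈
      Finsupp.supported k k (cellSet block A (j + Fintype.card ι) b ∅) :=
    cellInc_mem k block (supp_mono k hv fun x hx => ⟨x.2.1, hx, x.2.2, by simp⟩)
  obtain ⟨w, hw, hvw⟩ := normalize_cycle k block hb hbA hv' hd Finset.univ
  have hwcard : w ∈ Finsupp.supported k k
      {F : Finset E | MeetsBlocks block F ∧ F.card = (j + 1) + Fintype.card ι} :=
    supp_mono k hw fun F hF => ⟨hF.1, by rw [hF.2.2.1]; omega⟩
  have hincw : cellInc k block (j + 1) (cellRes k block (j + 1) w) = w := by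
    rw [cellInc_cellRes _ _ _ (supp_mono k hwcard fun F hF => hF.2)]
    have := mem_of_basis k (φ := blockProj k block - LinearMap.id) (N := ⊥)
      (fun F hF => ?_) hwcard
    · exact sub_eq_zero.1 (by simpa using this)
    · simp [blockProj_single_pos _ _ hF.1]
  set r := cellInc k block j v - blockProj k block (simplexBoundary k w) with hr
  -- the normalized cycle lives on the single cell spanned by the base points
  have hsup : ∀ F ∈ r.support, j = 0 ∧ F = Finset.univ.image b := by
    intro F hF
    obtain ⟨h1, -, h3, h4⟩ := (Finsupp.mem_supported k _).1 hvw hF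
    have hsub : F ⊆ Finset.univ.image b := fun x hx =>
      Finset.mem_image.2 ⟨block x, Finset.mem_univ _, (h4 x hx (Finset.mem_univ _)).symm⟩
    have hcard : (Finset.univ.image b).card ≤ Fintype.card ι :=
      Finset.card_image_le
    have := Finset.card_le_card hsub
    exact ⟨by omega, Finset.eq_of_subset_of_card_le hsub (by omega)⟩
  have hr0 : r = 0 := by
    by_cases hj : j = 0
    · have hs : r = Finsupp.single (Finset.univ.image b) (r (Finset.univ.image b)) := by
        ext F
        by_cases hF : F = Finset.univ.image b
        · rw [hF, Finsupp.single_eq_same]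
        · rw [Finsupp.single_eq_of_ne hF]
          by_contra h
          exact hF (hsup F (Finsupp.mem_support_iff.2 h)).2
      have hsum : coeffSum k r = 0 := by
        rw [hr, map_sub, hε hj, coeffSum_cell k block hmono, sub_zero]
        refine supp_mono k hwcard fun F hF => ⟨hF.1, ?_⟩
        rw [hF.2]; omega
      rw [hs] at hsum ⊢
      simp only [coeffSum, Finsupp.linearCombination_single, smul_eq_mul, mul_one] at hsum
      rw [hsum, Finsupp.single_zero]
    · ext F
      by_contra h
      exact hj (hsup F (Finsupp.mem_support_iff.2 h)).1
  refine ⟨cellRes k block (j + 1) w, ?_, cellInc_injective k block j ?_⟩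
  · rw [Finsupp.mem_supported]
    intro x hx
    have : cellRes k block (j + 1) w x ≠ 0 := Finsupp.mem_support_iff.1 hx
    rw [cellRes_apply] at this
    exact ((Finsupp.mem_supported k _).1 hw (Finsupp.mem_support_iff.2 this)).2.1
  · rw [cellInc_cellBoundary, hincw]
    exact (sub_eq_zero.1 hr0).symm

/-- The cellular complex of a product of simplices whose cells are labelled in such a way that
the cells with label `≤ a` are those with all vertices in a given set `A a`. -/
noncomputable def cellResolution [PartialOrder ι] (hmono : Monotone block) {P : Type*}
    [PartialOrder P] (A : P → Set E) (lb : ∀ F : Finset E, MeetsBlocks block F → P)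
    (hlb : ∀ F hF a, lb F hF ≤ a ↔ (F : Set E) ⊆ A a) : LabelledResolution k P where
  X := Cell block
  lab _ x := lb x.1 x.2.1
  d := cellBoundary k block
  ε := coeffSum k ∘ₗ cellInc k block 0
  d_mem j x := by
    rw [Finsupp.mem_supported]
    intro y hy
    have := cellBoundary_single_apply_ne k block (Finsupp.mem_support_iff.1 hy)
    rw [Set.mem_ofPred, hlb]
    exact fun e he => (hlb x.1 x.2.1 _).1 le_rfl (this he)
  ε_d w := by
    rw [LinearMap.comp_apply, cellInc_cellBoundary]
    refine coeffSum_cell k block hmono (cellInc_mem k block ((Finsupp.mem_supported k _).2 ?_))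
    intro x _
    exact ⟨x.2.1, by rw [x.2.2]; omega⟩
  d_d j w := by
    refine cellInc_injective k block j ?_
    rw [cellInc_cellBoundary, cellInc_cellBoundary, blockProj_boundary_blockProj,
      boundary_boundary, map_zero, map_zero]
  exact_zero a v hv hε := by
    simp only [hlb] at hv ⊢
    refine cell_exact k block hmono (A a) 0 hv ?_ (fun _ => hε)
    -- removing a vertex from a zero-dimensional cell leaves too few vertices
    have := mem_of_basis k (φ := blockProj k block ∘ₗ simplexBoundary k ∘ₗ cellInc k block 0)
      (N := ⊥) (fun x hx => ?_) hv
    · simpa using this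
    · simp only [LinearMap.comp_apply, cellInc_single, simplexBoundary_single, map_sum,
        Submodule.mem_bot]
      refine Finset.sum_eq_zero fun e he => blockProj_single_neg _ _ (fun h => ?_) _
      have h1 := h.card_le
      have h2 := Finset.card_erase_lt_of_mem he
      have h3 := x.2.2
      omega
  exact_succ j a v hv hd := by
    simp only [hlb] at hv ⊢
    refine cell_exact k block hmono (A a) (j + 1) hv ?_ (fun h => absurd h (by omega))
    rw [← cellInc_cellBoundary, hd, map_zero]

end CellResolution

/-! ### Homogeneous polynomials and the lattice ideal -/

section GradedPieces

variable {V : Type*} [Fintype V] (k : Type*) [Field k] (L : Submodule ℤ (V → ℤ))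

lemma degQ_add (u u' : V →₀ ℕ) : degQ L (u + u') = degQ L u + degQ L u' := by
  rw [degQ, degQ, degQ, ← Submodule.Quotient.mk_add]
  congr 1

lemma degQ_zero : degQ L 0 = 0 := by
  rw [degQ, Submodule.Quotient.mk_eq_zero]
  convert L.zero_mem
  simp

/-- The homogeneous polynomials of degree `D ∈ ℤ^V/L`. -/
noncomputable def homogPoly (D : (V → ℤ) ⧸ L) : Submodule k (MvPolynomial V k) where
  carrier := {q | ∀ u, degQ L u ≠ D → coeff u q = 0}
  zero_mem' u _ := by simp
  add_mem' ha hb u hu := by rw [coeff_add, ha u hu, hb u hu, add_zero]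
  smul_mem' r q hq u hu := by rw [coeff_smul, hq u hu, smul_zero]

variable {k L}

lemma homogPoly_induction {D : (V → ℤ) ⧸ L} {q : MvPolynomial V k} (hq : q ∈ homogPoly k L D)
    {N : Submodule k (MvPolynomial V k)} (h : ∀ u, degQ L u = D → monomial u (1 : k) ∈ N) :
    q ∈ N := by
  rw [← support_sum_monomial_coeff q]
  refine Submodule.sum_mem _ fun u hu => ?_
  have h1 : degQ L u = D := by
    by_contra hne
    exact (mem_support_iff.1 hu) (hq u hne)
  have h2 := N.smul_mem (coeff u q) (h u h1)
  rwa [smul_monomial, smul_eq_mul, mul_one] at h2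

lemma monomial_mem_homogPoly {D : (V → ℤ) ⧸ L} {u : V →₀ ℕ} (h : degQ L u = D) (r : k) :
    monomial u r ∈ homogPoly k L D := by
  classical
  intro u' hu'
  rw [coeff_monomial, if_neg]
  rintro rfl
  exact hu' h

lemma mul_mem_homogPoly {D D' : (V → ℤ) ⧸ L} {q q' : MvPolynomial V k}
    (hq : q ∈ homogPoly k L D) (hq' : q' ∈ homogPoly k L D') :
    q * q' ∈ homogPoly k L (D + D') := by
  refine homogPoly_induction hq (N := (homogPoly k L (D + D')).comap (LinearMap.mulRight k q'))
    fun u hu => ?_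
  refine homogPoly_induction hq' (N := (homogPoly k L (D + D')).comap
    (LinearMap.mulLeft k (monomial u 1))) fun u' hu' => ?_
  simp only [Submodule.mem_comap, LinearMap.mulLeft_apply, monomial_mul, mul_one]
  exact monomial_mem_homogPoly (by rw [degQ_add, hu, hu']) _

variable (k) in
open Classical in
/-- The sum of the coefficients of the homogeneous component of degree `D`. -/
noncomputable def degSum (D : (V → ℤ) ⧸ L) : MvPolynomial V k →ₗ[k] k :=
  (basisMonomials V k).constr k fun u => if degQ L u = D then 1 else 0

lemma degSum_monomial_pos {D : (V → ℤ) ⧸ L} {u : V →₀ ℕ} (h : degQ L u = D) :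
    degSum k D (monomial u 1) = 1 := by
  have := (basisMonomials V k).constr_basis k (M' := k)
    (fun u => open Classical in if degQ L u = D then 1 else 0) u
  rw [coe_basisMonomials] at this
  rw [degSum, this, if_pos h]

lemma degSum_monomial_neg {D : (V → ℤ) ⧸ L} {u : V →₀ ℕ} (h : degQ L u ≠ D) :
    degSum k D (monomial u 1) = 0 := by
  have := (basisMonomials V k).constr_basis k (M' := k)
    (fun u => open Classical in if degQ L u = D then 1 else 0) u
  rw [coe_basisMonomials] at this
  rw [degSum, this, if_neg h]

lemma degSum_mul (D : (V → ℤ) ⧸ L) (u : V →₀ ℕ) (q : MvPolynomial V k) :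
    degSum k D (monomial u 1 * q) = degSum k (D - degQ L u) q := by
  suffices h : degSum k D ∘ₗ LinearMap.mulLeft k (monomial u 1) = degSum k (D - degQ L u) from
    LinearMap.congr_fun h q
  refine MvPolynomial.linearMap_ext fun u' => LinearMap.ext_ring ?_
  simp only [LinearMap.comp_apply, LinearMap.mulLeft_apply, monomial_mul, mul_one]
  by_cases h : degQ L u' = D - degQ L u
  · rw [degSum_monomial_pos h, degSum_monomial_pos (by rw [degQ_add, h]; abel)]
  · rw [degSum_monomial_neg h, degSum_monomial_neg]
    rw [degQ_add]
    intro h'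
    exact h (by rw [← h']; abel)

lemma degSum_of_ne {D D' : (V → ℤ) ⧸ L} (h : D ≠ D') {q : MvPolynomial V k}
    (hq : q ∈ homogPoly k L D) : degSum k D' q = 0 :=
  homogPoly_induction hq (N := LinearMap.ker (degSum k D')) fun u hu =>
    degSum_monomial_neg (by rw [hu]; exact h)

lemma degQ_posExp (u : V → ℤ) (hu : u ∈ L) : degQ L (posExp u) = degQ L (negExp u) := by
  rw [degQ, degQ, Submodule.Quotient.eq]
  convert hu using 1
  ext i
  simp [posExp, negExp]

lemma degSum_of_mem {D : (V → ℤ) ⧸ L} {q : MvPolynomial V k} (hq : q ∈ latticeIdeal k L) :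
    degSum k D q = 0 := by
  induction hq using Submodule.span_induction generalizing D with
  | mem q h =>
    obtain ⟨u, hu, rfl⟩ := h
    rw [latticeBinomial, map_sub]
    by_cases h : degQ L (posExp u) = D
    · rw [degSum_monomial_pos h, degSum_monomial_pos (by rw [← degQ_posExp u hu, h]), sub_self]
    · rw [degSum_monomial_neg h, degSum_monomial_neg (by rw [← degQ_posExp u hu]; exact h),
        sub_self]
  | zero => simp
  | add x y _ _ hx hy => rw [map_add, hx, hy, add_zero]
  | smul r q _ ih =>
    suffices h : degSum k D ∘ₗ LinearMap.mulRight k q = 0 from LinearMap.congr_fun h r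
    refine MvPolynomial.linearMap_ext fun u' => LinearMap.ext_ring ?_
    simp [degSum_mul, ih]

lemma monomial_sub_mem {u u' : V →₀ ℕ} (h : degQ L u = degQ L u') :
    monomial u (1 : k) - monomial u' 1 ∈ latticeIdeal k L := by
  rw [degQ, degQ, Submodule.Quotient.eq] at h
  set l : V → ℤ := (fun i => (u i : ℤ)) - fun i => (u' i : ℤ) with hl
  have h1 : latticeBinomial k l ∈ latticeIdeal k L := Ideal.subset_span ⟨l, h, rfl⟩
  have h2 := (latticeIdeal k L).mul_mem_left (monomial (u ⊓ u') 1) h1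
  convert h2 using 1
  rw [latticeBinomial, mul_sub, monomial_mul, monomial_mul, mul_one]
  congr 3
  · ext i
    simp only [Finsupp.add_apply, Finsupp.inf_apply, posExp, Finsupp.equivFunOnFinite_symm_apply_apply,
      hl, Pi.sub_apply]
    omega
  · ext i
    simp only [Finsupp.add_apply, Finsupp.inf_apply, negExp, Finsupp.equivFunOnFinite_symm_apply_apply,
      hl, Pi.sub_apply]
    omega

lemma mem_latticeIdeal_of_degSum {D : (V → ℤ) ⧸ L} {q : MvPolynomial V k}
    (hq : q ∈ homogPoly k L D) (h : degSum k D q = 0) : q ∈ latticeIdeal k L := by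
  by_cases hD : ∃ u₀ : V →₀ ℕ, degQ L u₀ = D
  · obtain ⟨u₀, hu₀⟩ := hD
    have key : q - degSum k D q • monomial u₀ 1 ∈ latticeIdeal k L := by
      have := homogPoly_induction hq (N := ((latticeIdeal k L).restrictScalars k).comap
        (LinearMap.id - (degSum k D).smulRight (monomial u₀ 1))) fun u hu => by
          simp only [Submodule.mem_comap, LinearMap.sub_apply, LinearMap.id_apply,
            LinearMap.smulRight_apply, degSum_monomial_pos hu, one_smul,
            Submodule.restrictScalars_mem]
          exact monomial_sub_mem (hu.trans hu₀.symm)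
      exact this
    simpa [h] using key
  · exact homogPoly_induction hq (N := (latticeIdeal k L).restrictScalars k) fun u hu =>
      absurd ⟨u, hu⟩ hD

end GradedPieces

/-! ### Lifting homogeneous vectors along `ℤ^V → ℤ^V/L` -/

section Strand

variable {V : Type*} [Fintype V] {k : Type*} [Field k] {L : Submodule ℤ (V → ℤ)}

lemma pi_monomial_ext {τ M : Type*} [Finite τ] [AddCommGroup M] [Module k M]
    {φ ψ : (τ → MvPolynomial V k) →ₗ[k] M} [DecidableEq τ]
    (h : ∀ g u, φ (Pi.single g (monomial u 1)) = ψ (Pi.single g (monomial u 1))) : φ = ψ := by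
  refine LinearMap.pi_ext' fun g => MvPolynomial.linearMap_ext fun u => LinearMap.ext_ring ?_
  simpa using h g u

variable (k) in
/-- The homogeneous elements of degree `D` of the free module with generators in degrees `dg`. -/
noncomputable def homogVec {τ : Type*} (dg : τ → (V → ℤ) ⧸ L) (D : (V → ℤ) ⧸ L) :
    Submodule k (τ → MvPolynomial V k) :=
  Submodule.pi Set.univ fun g => homogPoly k L (D - dg g)

lemma homogVec_induction {τ : Type*} [Fintype τ] [DecidableEq τ] {dg : τ → (V → ℤ) ⧸ L}
    {D : (V → ℤ) ⧸ L} {w : τ → MvPolynomial V k} (hw : w ∈ homogVec k dg D)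
    {N : Submodule k (τ → MvPolynomial V k)}
    (h : ∀ g u, degQ L u + dg g = D → Pi.single g (monomial u (1 : k)) ∈ N) : w ∈ N := by
  rw [← Finset.univ_sum_single w]
  refine Submodule.sum_mem _ fun g _ => ?_
  exact homogPoly_induction (hw g (Set.mem_univ _))
    (N := N.comap (LinearMap.single k (fun _ => MvPolynomial V k) g)) fun u hu =>
      h g u (by rw [hu, sub_add_cancel])

variable {c : V → ℤ}

/-- The vector `a - u`, which stays below `c`. -/
def subExp (a : Set.Iic c) (u : V →₀ ℕ) : Set.Iic c :=
  ⟨fun i => a.1 i - u i, fun i => by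
    have : a.1 i ≤ c i := a.2 i
    change a.1 i - u i ≤ c i
    omega⟩

lemma subExp_le (a : Set.Iic c) (u : V →₀ ℕ) : subExp a u ≤ a := fun i => by
  change a.1 i - u i ≤ a.1 i
  omega

lemma subExp_add (a : Set.Iic c) (u u' : V →₀ ℕ) : subExp a (u + u') = subExp (subExp a u) u' := by
  ext i
  simp only [subExp, Finsupp.add_apply]
  push_cast
  ring

lemma mk_subExp (a : Set.Iic c) (u : V →₀ ℕ) :
    (Submodule.Quotient.mk (subExp a u).1 : (V → ℤ) ⧸ L) =
      Submodule.Quotient.mk a.1 - degQ L u := rfl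

lemma subExp_posExp {a b : Set.Iic c} (h : b ≤ a) : subExp a (posExp (a.1 - b.1)) = b := by
  ext i
  have : b.1 i ≤ a.1 i := h i
  simp only [subExp, posExp, Finsupp.equivFunOnFinite_symm_apply_apply, Pi.sub_apply]
  omega

lemma degQ_posExp_sub {a b : Set.Iic c} (h : b ≤ a) :
    degQ L (posExp (a.1 - b.1)) = Submodule.Quotient.mk a.1 - Submodule.Quotient.mk b.1 := by
  have := mk_subExp (L := L) a (posExp (a.1 - b.1))
  rw [subExp_posExp h] at this
  rw [this]; abel

variable (c) in
/-- The generators `g` of a graded free module, moved to all vectors `b ≤ c` in the class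
`dg g ∈ ℤ^V/L`. -/
abbrev LiftedGen {τ : Type*} (dg : τ → (V → ℤ) ⧸ L) : Type _ :=
  {x : τ × Set.Iic c // Submodule.Quotient.mk x.2.1 = dg x.1}

variable {τ : Type*} [Fintype τ] [DecidableEq τ] (dg : τ → (V → ℤ) ⧸ L)

variable (k) in
open Classical in
/-- The map sending `x^u • g` to the generator `g` moved to `a - u`, if this vector lies in the
class of the degree of `g`, and to zero otherwise. -/
noncomputable def liftVec (a : Set.Iic c) :
    (τ → MvPolynomial V k) →ₗ[k] (LiftedGen c dg →₀ k) :=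
  ∑ g, ((basisMonomials V k).constr k fun u =>
    if h : Submodule.Quotient.mk (subExp a u).1 = dg g then
      Finsupp.single (⟨(g, subExp a u), h⟩ : LiftedGen c dg) (1 : k) else 0) ∘ₗ LinearMap.proj g

lemma liftVec_single (a : Set.Iic c) (g : τ) (u : V →₀ ℕ) :
    liftVec k dg a (Pi.single g (monomial u 1)) = open Classical in
      if h : Submodule.Quotient.mk (subExp a u).1 = dg g then
        Finsupp.single (⟨(g, subExp a u), h⟩ : LiftedGen c dg) (1 : k) else 0 := by
  classical
  rw [liftVec, LinearMap.sum_apply, Finset.sum_eq_single g]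
  · have := (basisMonomials V k).constr_basis k (M' := LiftedGen c dg →₀ k)
      (fun u => if h : Submodule.Quotient.mk (subExp a u).1 = dg g then
        Finsupp.single (⟨(g, subExp a u), h⟩ : LiftedGen c dg) (1 : k) else 0) u
    rw [coe_basisMonomials] at this
    rw [LinearMap.comp_apply, LinearMap.proj_apply, Pi.single_eq_same, this]
  · intro g' _ hg'
    rw [LinearMap.comp_apply, LinearMap.proj_apply, Pi.single_eq_of_ne hg', map_zero]
  · simp

lemma liftVec_single_pos {a : Set.Iic c} {g : τ} {u : V →₀ ℕ}
    (h : Submodule.Quotient.mk (subExp a u).1 = dg g) :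
    liftVec k dg a (Pi.single g (monomial u 1)) =
      Finsupp.single (⟨(g, subExp a u), h⟩ : LiftedGen c dg) (1 : k) := by
  rw [liftVec_single, dif_pos h]

lemma liftVec_single_neg {a : Set.Iic c} {g : τ} {u : V →₀ ℕ}
    (h : Submodule.Quotient.mk (subExp a u).1 ≠ dg g) :
    liftVec k dg a (Pi.single g (monomial u 1)) = 0 := by
  rw [liftVec_single, dif_neg h]

lemma liftVec_mem (a : Set.Iic c) (w : τ → MvPolynomial V k) :
    liftVec k dg a w ∈ Finsupp.supported k k {x : LiftedGen c dg | x.1.2 ≤ a} := by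
  suffices h : (Submodule.mkQ (Finsupp.supported k k {x : LiftedGen c dg | x.1.2 ≤ a})) ∘ₗ
      liftVec k dg a = 0 from
    (Submodule.Quotient.mk_eq_zero _).1 (LinearMap.congr_fun h w)
  refine pi_monomial_ext fun g u => ?_
  refine (Submodule.Quotient.mk_eq_zero _).2 ?_
  by_cases h : (Submodule.Quotient.mk (subExp a u).1 : (V → ℤ) ⧸ L) = dg g
  · rw [liftVec_single_pos dg h]
    exact Finsupp.single_mem_supported k _ (subExp_le a u)
  · rw [liftVec_single_neg dg h]
    exact Submodule.zero_mem _

lemma liftVec_monomial_smul (a : Set.Iic c) (u : V →₀ ℕ) (w : τ → MvPolynomial V k) :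
    liftVec k dg a ((monomial u (1 : k)) • w) = liftVec k dg (subExp a u) w := by
  suffices h : liftVec k dg a ∘ₗ
      (LinearMap.lsmul (MvPolynomial V k) (τ → MvPolynomial V k) (monomial u 1)).restrictScalars k =
      liftVec k dg (subExp a u) from LinearMap.congr_fun h w
  refine pi_monomial_ext fun g u' => ?_
  have e : (monomial u (1 : k)) • (Pi.single g (monomial u' 1) : τ → MvPolynomial V k) =
      Pi.single g (monomial (u + u') 1) := by
    rw [← Pi.single_smul, smul_eq_mul, monomial_mul, mul_one]
  simp only [LinearMap.comp_apply, LinearMap.coe_restrictScalars, LinearMap.lsmul_apply, e]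
  rw [liftVec_single, liftVec_single, subExp_add]

lemma liftVec_of_ne {a : Set.Iic c} {D : (V → ℤ) ⧸ L} (h : Submodule.Quotient.mk a.1 ≠ D)
    {w : τ → MvPolynomial V k} (hw : w ∈ homogVec k dg D) : liftVec k dg a w = 0 :=
  homogVec_induction hw (N := LinearMap.ker (liftVec k dg a)) fun g u hu =>
    liftVec_single_neg dg fun h' => h (by rw [← hu, ← h', mk_subExp]; abel)

/-- At a generator moved to `a` itself, the lift reads off the constant coefficient. -/
lemma liftVec_apply_self (a : Set.Iic c) (w : τ → MvPolynomial V k) (x : LiftedGen c dg)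
    (hx : x.1.2 = a) : liftVec k dg a w x = coeff 0 (w x.1.1) := by
  classical
  suffices h : Finsupp.lapply x ∘ₗ liftVec k dg a = lcoeff k 0 ∘ₗ LinearMap.proj x.1.1 from
    LinearMap.congr_fun h w
  refine pi_monomial_ext fun g u => ?_
  simp only [LinearMap.comp_apply, Finsupp.lapply_apply, LinearMap.proj_apply, lcoeff_apply]
  obtain ⟨⟨g', b⟩, hb⟩ := x
  obtain rfl : b = a := hx
  have hu : subExp b u = b ↔ u = 0 := by
    constructor
    · intro h
      ext i
      have := congrFun (congrArg Subtype.val h) i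
      simp only [subExp] at this
      simp only [Finsupp.zero_apply]
      omega
    · rintro rfl
      ext i
      simp [subExp]
  by_cases h : (Submodule.Quotient.mk (subExp b u).1 : (V → ℤ) ⧸ L) = dg g
  · rw [liftVec_single_pos dg h, Finsupp.single_apply]
    by_cases hg : g = g'
    · subst hg
      rw [Pi.single_eq_same, coeff_monomial]
      simp [hu]
    · rw [Pi.single_eq_of_ne (Ne.symm hg), coeff_zero, if_neg]
      simp [hg]
  · rw [liftVec_single_neg dg h]
    by_cases hg : g = g'
    · subst hg
      rw [Pi.single_eq_same, coeff_monomial, if_neg, Finsupp.zero_apply]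
      rintro rfl
      exact h (by rw [hu.2 rfl]; exact hb)
    · rw [Pi.single_eq_of_ne (Ne.symm hg), coeff_zero, Finsupp.zero_apply]

variable (k) in
/-- The map sending the generator `g`, moved to `b`, to `x^{a-b} • g` (for `b ≤ a`). -/
noncomputable def descend (a : Set.Iic c) :
    (LiftedGen c dg →₀ k) →ₗ[k] (τ → MvPolynomial V k) :=
  Finsupp.linearCombination k fun x => Pi.single x.1.1 (monomial (posExp (a.1 - x.1.2.1)) 1)

lemma descend_single (a : Set.Iic c) (x : LiftedGen c dg) :
    descend k dg a (Finsupp.single x 1) =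
      Pi.single x.1.1 (monomial (posExp (a.1 - x.1.2.1)) 1) := by
  simp [descend]

lemma supported_induction {X : Type*} {s : Set X} {v : X →₀ k}
    (hv : v ∈ Finsupp.supported k k s) {N : Submodule k (X →₀ k)}
    (h : ∀ x ∈ s, Finsupp.single x 1 ∈ N) : v ∈ N :=
  LabelledResolution.map_mem_of_basis (φ := LinearMap.id) h hv

lemma liftVec_descend {a : Set.Iic c} {v : LiftedGen c dg →₀ k}
    (hv : v ∈ Finsupp.supported k k {x : LiftedGen c dg | x.1.2 ≤ a}) :
    liftVec k dg a (descend k dg a v) = v := by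
  have := supported_induction hv
    (N := LinearMap.ker (liftVec k dg a ∘ₗ descend k dg a - LinearMap.id)) (fun x hx => ?_)
  · exact sub_eq_zero.1 this
  · have hx : x.1.2 ≤ a := hx
    have e : liftVec k dg a (descend k dg a (Finsupp.single x 1)) = Finsupp.single x 1 := by
      rw [descend_single, liftVec_single_pos dg (by rw [subExp_posExp hx]; exact x.2)]
      congr 1
      exact Subtype.ext (Prod.ext rfl (subExp_posExp hx))
    rw [LinearMap.mem_ker, LinearMap.sub_apply, LinearMap.comp_apply, e, LinearMap.id_apply,
      sub_self]

lemma single_monomial_mem_homogVec {D : (V → ℤ) ⧸ L} {g : τ} {u : V →₀ ℕ}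
    (h : degQ L u + dg g = D) : Pi.single g (monomial u (1 : k)) ∈ homogVec k dg D := by
  intro g' _
  by_cases hg : g' = g
  · subst hg
    rw [Pi.single_eq_same]
    exact monomial_mem_homogPoly (by rw [← h]; abel) _
  · rw [Pi.single_eq_of_ne hg]
    exact Submodule.zero_mem _

lemma descend_mem {a : Set.Iic c} {v : LiftedGen c dg →₀ k}
    (hv : v ∈ Finsupp.supported k k {x : LiftedGen c dg | x.1.2 ≤ a}) :
    descend k dg a v ∈ homogVec k dg (Submodule.Quotient.mk a.1) :=
  supported_induction hv (N := (homogVec k dg (Submodule.Quotient.mk a.1)).comap (descend k dg a))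
    fun x hx => by
      rw [Submodule.mem_comap, descend_single]
      refine single_monomial_mem_homogVec dg ?_
      rw [degQ_posExp_sub hx, x.2, sub_add_cancel]

lemma descend_liftVec {a : Set.Iic c} {w : τ → MvPolynomial V k}
    (hw : w ∈ homogVec k dg (Submodule.Quotient.mk a.1)) :
    descend k dg a (liftVec k dg a w) = w := by
  have := homogVec_induction hw
    (N := LinearMap.ker (descend k dg a ∘ₗ liftVec k dg a - LinearMap.id)) (fun g u hu => ?_)
  · exact sub_eq_zero.1 this
  · have e : posExp (a.1 - (subExp a u).1) = u := by
      ext i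
      simp [posExp, subExp]
    rw [LinearMap.mem_ker, LinearMap.sub_apply, LinearMap.comp_apply,
      liftVec_single_pos dg (by rw [mk_subExp, ← hu]; abel), descend_single]
    simp only [e, LinearMap.id_apply, sub_self]

end Strand

/-! ### Graded resolutions as labelled resolutions -/

section StrandResolution

variable {V : Type*} [Fintype V] {k : Type*} [Field k] {L : Submodule ℤ (V → ℤ)}

lemma mem_homogPoly_of_support {D : (V → ℤ) ⧸ L} {q : MvPolynomial V k}
    (h : ∀ u ∈ q.support, degQ L u = D) : q ∈ homogPoly k L D := fun u hu => by
  by_contra hc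
  exact hu (h u (mem_support_iff.2 hc))

variable {τ τ' : Type*} [Fintype τ] [Fintype τ'] [DecidableEq τ] [DecidableEq τ']
  {dg : τ → (V → ℤ) ⧸ L} {dg' : τ' → (V → ℤ) ⧸ L} {c : V → ℤ}

/-- The differential on lifted generators induced by a matrix. -/
noncomputable def liftMatrix (M : Matrix τ τ' (MvPolynomial V k)) (dg : τ → (V → ℤ) ⧸ L)
    (dg' : τ' → (V → ℤ) ⧸ L) (c : V → ℤ) :
    (LiftedGen c dg' →₀ k) →ₗ[k] (LiftedGen c dg →₀ k) :=
  Finsupp.linearCombination k fun x => liftVec k dg x.1.2 (M.col x.1.1)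

lemma liftMatrix_single (M : Matrix τ τ' (MvPolynomial V k)) (x : LiftedGen c dg') :
    liftMatrix M dg dg' c (Finsupp.single x 1) = liftVec k dg x.1.2 (M.col x.1.1) := by
  simp [liftMatrix]

lemma mulVec_single_monomial (M : Matrix τ τ' (MvPolynomial V k)) (f : τ') (u : V →₀ ℕ) :
    M.mulVec (Pi.single f (monomial u 1)) = (monomial u (1 : k)) • M.col f := by
  ext1 g
  rw [Matrix.mulVec_single, Pi.smul_apply, Pi.smul_apply, MulOpposite.smul_eq_mul_unop,
    smul_eq_mul, mul_comm]
  rfl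

/-- Lifting to the vector `a` is a chain map. -/
lemma liftMatrix_liftVec {M : Matrix τ τ' (MvPolynomial V k)}
    (hM : ∀ f, M.col f ∈ homogVec k dg (dg' f)) (a : Set.Iic c) (w : τ' → MvPolynomial V k) :
    liftMatrix M dg dg' c (liftVec k dg' a w) = liftVec k dg a (M.mulVec w) := by
  suffices h : liftMatrix M dg dg' c ∘ₗ liftVec k dg' a =
      liftVec k dg a ∘ₗ M.mulVecLin.restrictScalars k from LinearMap.congr_fun h w
  refine pi_monomial_ext fun f u => ?_
  simp only [LinearMap.comp_apply, LinearMap.coe_restrictScalars, Matrix.mulVecLin_apply]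
  rw [mulVec_single_monomial, liftVec_monomial_smul]
  by_cases h : (Submodule.Quotient.mk (subExp a u).1 : (V → ℤ) ⧸ L) = dg' f
  · rw [liftVec_single_pos dg' h, liftMatrix_single]
  · rw [liftVec_single_neg dg' h, map_zero, liftVec_of_ne dg h (hM f)]

lemma mulVec_mem_homogVec {M : Matrix τ τ' (MvPolynomial V k)}
    (hM : ∀ f, M.col f ∈ homogVec k dg (dg' f)) {D : (V → ℤ) ⧸ L} {w : τ' → MvPolynomial V k}
    (hw : w ∈ homogVec k dg' D) : M.mulVec w ∈ homogVec k dg D := by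
  refine homogVec_induction hw
    (N := (homogVec k dg D).comap (M.mulVecLin.restrictScalars k)) fun f u hu => ?_
  simp only [Submodule.mem_comap, LinearMap.coe_restrictScalars, Matrix.mulVecLin_apply,
    mulVec_single_monomial]
  intro g _
  have := mul_mem_homogPoly (monomial_mem_homogPoly (k := k) (L := L) (u := u) rfl 1)
    (hM f g (Set.mem_univ _))
  have e : D - dg g = degQ L u + (dg' f - dg g) := by rw [← hu]; abel
  change monomial u 1 * M.col f g ∈ homogPoly k L (D - dg g)
  rw [e]
  exact this

/-- The exactness of the lifted complex at `τ'`, from the exactness of the free complex. -/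
lemma liftMatrix_exact {τ'' : Type*} [Fintype τ''] [DecidableEq τ''] {dg'' : τ'' → (V → ℤ) ⧸ L}
    {M : Matrix τ τ' (MvPolynomial V k)} (hM : ∀ f, M.col f ∈ homogVec k dg (dg' f))
    {M' : Matrix τ' τ'' (MvPolynomial V k)} (hM' : ∀ f, M'.col f ∈ homogVec k dg' (dg'' f))
    (hex : LinearMap.ker M.mulVecLin = LinearMap.range M'.mulVecLin) (a : Set.Iic c)
    {v : LiftedGen c dg' →₀ k}
    (hv : v ∈ Finsupp.supported k k {x : LiftedGen c dg' | x.1.2 ≤ a})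
    (h0 : liftMatrix M dg dg' c v = 0) :
    ∃ w ∈ Finsupp.supported k k {x : LiftedGen c dg'' | x.1.2 ≤ a},
      liftMatrix M' dg' dg'' c w = v := by
  have h1 : M.mulVec (descend k dg' a v) = 0 := by
    have hh := mulVec_mem_homogVec hM (descend_mem dg' hv)
    rw [← descend_liftVec dg hh, ← liftMatrix_liftVec hM, liftVec_descend dg' hv, h0, map_zero]
  have h2 : descend k dg' a v ∈ LinearMap.range M'.mulVecLin := hex ▸ LinearMap.mem_ker.2 h1
  obtain ⟨y, hy⟩ := h2
  refine ⟨liftVec k dg'' a y, liftVec_mem dg'' a y, ?_⟩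
  rw [liftMatrix_liftVec hM', ← Matrix.mulVecLin_apply, hy, liftVec_descend dg' hv]

variable (p : τ → MvPolynomial V k)

/-- The augmentation on lifted generators. -/
noncomputable def liftAug (dg : τ → (V → ℤ) ⧸ L) (c : V → ℤ) : (LiftedGen c dg →₀ k) →ₗ[k] k :=
  Finsupp.linearCombination k fun x => degSum k (dg x.1.1) (p x.1.1)

/-- The map `w ↦ ∑ w g * p g`. -/
noncomputable def dotPoly : (τ → MvPolynomial V k) →ₗ[k] MvPolynomial V k :=
  ∑ g, LinearMap.mulRight k (p g) ∘ₗ LinearMap.proj g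

lemma dotPoly_apply (w : τ → MvPolynomial V k) : dotPoly p w = ∑ g, w g * p g := by
  simp [dotPoly]

lemma dotPoly_single (g : τ) (q : MvPolynomial V k) : dotPoly p (Pi.single g q) = q * p g := by
  rw [dotPoly_apply, Finset.sum_eq_single g]
  · simp
  · intro g' _ hg; simp [Pi.single_eq_of_ne hg]
  · simp

variable {p}

lemma liftAug_liftVec (hp : ∀ g, p g ∈ homogPoly k L (dg g)) (a : Set.Iic c)
    (w : τ → MvPolynomial V k) :
    liftAug p dg c (liftVec k dg a w) =
      degSum k (L := L) (Submodule.Quotient.mk a.1) (dotPoly p w) := by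
  suffices h : liftAug p dg c ∘ₗ liftVec k dg a =
      degSum k (L := L) (Submodule.Quotient.mk a.1) ∘ₗ dotPoly p from LinearMap.congr_fun h w
  refine pi_monomial_ext fun g u => ?_
  rw [LinearMap.comp_apply, LinearMap.comp_apply, dotPoly_single, degSum_mul, ← mk_subExp]
  by_cases h : (Submodule.Quotient.mk (subExp a u).1 : (V → ℤ) ⧸ L) = dg g
  · rw [liftVec_single_pos dg h, h]
    simp [liftAug]
  · rw [liftVec_single_neg dg h, map_zero, degSum_of_ne (Ne.symm h) (hp g)]

lemma dotPoly_mem (hp : ∀ g, p g ∈ homogPoly k L (dg g)) {D : (V → ℤ) ⧸ L}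
    {w : τ → MvPolynomial V k} (hw : w ∈ homogVec k dg D) : dotPoly p w ∈ homogPoly k L D := by
  refine homogVec_induction hw (N := (homogPoly k L D).comap (dotPoly p)) fun g u hu => ?_
  rw [Submodule.mem_comap, dotPoly_single, ← hu]
  exact mul_mem_homogPoly (monomial_mem_homogPoly rfl _) (hp g)

end StrandResolution

section MinimalResolution

variable {V : Type*} [Fintype V] {k : Type*} [Field k] {L : Submodule ℤ (V → ℤ)}
  {σ : ℕ → Type} [∀ j, Fintype (σ j)] {deg : ∀ j, σ j → ((V → ℤ) ⧸ L)}
  {A : ∀ j, Matrix (σ j) (σ (j + 1)) (MvPolynomial V k)} {p : σ 0 → MvPolynomial V k}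

lemma IsMinimalGradedFreeResolution.col_mem
    (hres : IsMinimalGradedFreeResolution k L σ deg A p) (j : ℕ) (f : σ (j + 1)) :
    (A j).col f ∈ homogVec k (deg j) (deg (j + 1) f) := fun g _ =>
  mem_homogPoly_of_support fun u hu => by
    rw [← hres.2.2.1 j g f u hu]; abel

lemma IsMinimalGradedFreeResolution.aug_mem
    (hres : IsMinimalGradedFreeResolution k L σ deg A p) (g : σ 0) :
    p g ∈ homogPoly k L (deg 0 g) := mem_homogPoly_of_support (hres.2.1 g)

open Classical in
/-- The graded free resolution, viewed as a labelled resolution: the labels are all vectors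
below `c` instead of classes modulo `L`. -/
noncomputable def strandResolution (hres : IsMinimalGradedFreeResolution k L σ deg A p)
    (c : V → ℤ) : LabelledResolution k (Set.Iic c) where
  X j := LiftedGen c (deg j)
  lab _ x := x.1.2
  d j := liftMatrix (A j) (deg j) (deg (j + 1)) c
  ε := liftAug p (deg 0) c
  d_mem j x := by
    rw [liftMatrix_single]
    exact liftVec_mem _ _ _
  ε_d w := by
    suffices h : liftAug p (deg 0) c ∘ₗ liftMatrix (A 0) (deg 0) (deg 1) c = 0 from
      LinearMap.congr_fun h w
    refine Finsupp.lhom_ext' fun x => LinearMap.ext_ring ?_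
    simp only [LinearMap.comp_apply, Finsupp.lsingle_apply, LinearMap.zero_apply]
    rw [liftMatrix_single, liftAug_liftVec hres.aug_mem]
    refine degSum_of_mem ?_
    rw [dotPoly_apply]
    exact (hres.1.2.1 _).2 ⟨Pi.single x.1.1 1, by simp⟩
  d_d j w := by
    suffices h : liftMatrix (A j) (deg j) (deg (j + 1)) c ∘ₗ
        liftMatrix (A (j + 1)) (deg (j + 1)) (deg (j + 2)) c = 0 from LinearMap.congr_fun h w
    refine Finsupp.lhom_ext' fun x => LinearMap.ext_ring ?_
    simp only [LinearMap.comp_apply, Finsupp.lsingle_apply, LinearMap.zero_apply]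
    rw [liftMatrix_single, liftMatrix_liftVec (hres.col_mem j)]
    have h1 : (A (j + 1)).col x.1.1 ∈ LinearMap.ker (A j).mulVecLin := by
      rw [hres.1.2.2 j]
      exact ⟨Pi.single x.1.1 1, by simp⟩
    have h2 : (A j).mulVec ((A (j + 1)).col x.1.1) = 0 := h1
    rw [h2, map_zero]
  exact_zero a v hv hε := by
    have h1 : descend k (deg 0) a v ∈ LinearMap.range (A 0).mulVecLin := by
      rw [← hres.1.2.1, ← dotPoly_apply]
      refine mem_latticeIdeal_of_degSum (dotPoly_mem hres.aug_mem (descend_mem (deg 0) hv)) ?_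
      rw [← liftAug_liftVec hres.aug_mem, liftVec_descend _ hv, hε]
    obtain ⟨y, hy⟩ := h1
    refine ⟨liftVec k (deg 1) a y, liftVec_mem _ a y, ?_⟩
    rw [liftMatrix_liftVec (hres.col_mem 0), ← Matrix.mulVecLin_apply, hy,
      liftVec_descend _ hv]
  exact_succ j a v hv hd :=
    liftMatrix_exact (hres.col_mem j) (hres.col_mem (j + 1)) (hres.1.2.2 j) a hv hd

lemma strandResolution_minimalAt (hres : IsMinimalGradedFreeResolution k L σ deg A p)
    (c : V → ℤ) (a : Set.Iic c) : (strandResolution hres c).MinimalAt a := by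
  classical
  intro j (x : LiftedGen c (deg (j + 1))) (y : LiftedGen c (deg j)) hx hy
  change liftMatrix (A j) (deg j) (deg (j + 1)) c (Finsupp.single x 1) y = 0
  have hyx : y.1.2 = x.1.2 := hy.trans hx.symm
  rw [liftMatrix_single, liftVec_apply_self (deg j) _ _ y hyx]
  exact hres.2.2.2 j _ _

lemma strandResolution_exists_aug (hres : IsMinimalGradedFreeResolution k L σ deg A p)
    (c : V → ℤ) (a : Set.Iic c) (h : ∃ l ∈ L, l ≤ a.1) :
    ∃ v ∈ LabelledResolution.below ((strandResolution hres c).lab 0) k a,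
      (strandResolution hres c).ε v = 1 := by
  classical
  obtain ⟨l, hl, hla⟩ := h
  have h1 : (1 : MvPolynomial V k) ∈ Ideal.span (Set.range p) ⊔ latticeIdeal k L := by
    rw [hres.1.1]; trivial
  obtain ⟨q, hq, i, hi, hqi⟩ := Submodule.mem_sup.1 h1
  obtain ⟨r, hr⟩ := (Submodule.mem_span_range_iff_exists_fun _).1 hq
  let u : V →₀ ℕ := posExp (a.1 - l)
  have hu : degQ L u = Submodule.Quotient.mk a.1 := by
    rw [degQ, Submodule.Quotient.eq]
    convert L.neg_mem hl using 1
    ext x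
    have : l x ≤ a.1 x := hla x
    simp only [u, posExp, Finsupp.equivFunOnFinite_symm_apply_apply, Pi.sub_apply, Pi.neg_apply]
    omega
  refine ⟨liftVec k (deg 0) a (monomial u (1 : k) • r), liftVec_mem _ a _, ?_⟩
  change liftAug p (deg 0) c _ = 1
  have e : dotPoly p (monomial u (1 : k) • r) = monomial u 1 - monomial u 1 * i := by
    have : monomial u (1 : k) * q = monomial u 1 - monomial u 1 * i := by
      linear_combination (monomial u (1 : k)) * hqi
    rw [← this, ← hr, dotPoly_apply, Finset.mul_sum]
    refine Finset.sum_congr rfl fun g _ => ?_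
    simp [mul_assoc]
  rw [liftAug_liftVec hres.aug_mem, e, map_sub, degSum_monomial_pos hu,
    degSum_of_mem ((latticeIdeal k L).mul_mem_left _ hi), sub_zero]

lemma strandResolution_aug (hres : IsMinimalGradedFreeResolution k L σ deg A p)
    (c : V → ℤ) (x : LiftedGen c (deg 0))
    (h : (strandResolution hres c).ε (Finsupp.single x 1) ≠ 0) :
    ∃ l ∈ L, l ≤ ((strandResolution hres c).lab 0 x).1 := by
  classical
  have h' : liftAug p (deg 0) c (Finsupp.single x 1) ≠ 0 := h
  rw [liftAug, Finsupp.linearCombination_single, one_smul] at h'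
  have hp : p x.1.1 ≠ 0 := fun h0 => h' (by rw [h0, map_zero])
  obtain ⟨u, hu⟩ := support_nonempty.2 hp
  have hd := hres.2.1 x.1.1 u hu
  rw [← x.2, degQ, eq_comm, Submodule.Quotient.eq] at hd
  refine ⟨_, hd, fun i => ?_⟩
  change x.1.2.1 i - u i ≤ x.1.2.1 i
  omega

/-- The basis elements with label `a` are the generators of degree `a + L`. -/
lemma strandResolution_card (hres : IsMinimalGradedFreeResolution k L σ deg A p)
    (c : V → ℤ) (a : Set.Iic c) (j : ℕ) :
    Nonempty ({x : (strandResolution hres c).X j // (strandResolution hres c).lab j x = a} ≃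
      {g : σ j // deg j g = Submodule.Quotient.mk a.1}) := by
  refine ⟨⟨fun x => ⟨x.1.1.1, ?_⟩, fun g => ⟨⟨(g.1, a), g.2.symm⟩, rfl⟩, ?_, fun g => rfl⟩⟩
  · have h : x.1.1.2 = a := x.2
    rw [← x.1.2, h]
  · rintro ⟨⟨⟨g, b⟩, hb⟩, rfl⟩
    rfl

end MinimalResolution

/-! ### Betti numbers from a labelled product of simplices -/

section Comparison

variable {V E ι : Type} [Fintype V] [LinearOrder E] [Fintype E] [Fintype ι] [PartialOrder ι]
  {k : Type*} [Field k] {L : Submodule ℤ (V → ℤ)}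
  {σ : ℕ → Type} [∀ j, Fintype (σ j)] {deg : ∀ j, σ j → ((V → ℤ) ⧸ L)}
  {A : ∀ j, Matrix (σ j) (σ (j + 1)) (MvPolynomial V k)} {p : σ 0 → MvPolynomial V k}
  {block : E → ι} {rb : V → ι} {lam : E → V → ℤ} {c : V → ℤ}

/-- The vertices whose label is `≤ a`; a vertex only carries labels in the coordinates of its own
block. -/
def vertsBelow (block : E → ι) (rb : V → ι) (lam : E → V → ℤ) (a : V → ℤ) : Set E :=
  {e | ∀ i, rb i = block e → lam e i ≤ a i}

open Classical in
lemma MeetsBlocks.filter_nonempty {F : Finset E} (hF : MeetsBlocks block F) (i : ι) :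
    (F.filter fun e => block e = i).Nonempty := by
  obtain ⟨e, he, hi⟩ := hF i
  exact ⟨e, Finset.mem_filter.2 ⟨he, hi⟩⟩

open Classical in
/-- The coordinatewise maximum of the vertex labels of a cell. -/
noncomputable def cellLabel (rb : V → ι) (lam : E → V → ℤ)
    (h2 : ∀ e i, rb i = block e → lam e i ≤ c i) (F : Finset E) (hF : MeetsBlocks block F) :
    Set.Iic c :=
  ⟨fun i => (F.filter fun e => block e = rb i).sup' (hF.filter_nonempty (rb i)) fun e => lam e i,
    fun i => by
    refine Finset.sup'_le _ _ fun e he => h2 e i ?_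
    exact (Finset.mem_filter.1 he).2.symm⟩

lemma cellLabel_le_iff (h2 : ∀ e i, rb i = block e → lam e i ≤ c i) (F : Finset E)
    (hF : MeetsBlocks block F) (a : Set.Iic c) :
    cellLabel rb lam h2 F hF ≤ a ↔ (F : Set E) ⊆ vertsBelow block rb lam a.1 := by
  classical
  constructor
  · intro h e he i hi
    have h' : cellLabel rb lam h2 F hF ≤ a := h
    have := h' i
    refine le_trans ?_ this
    exact Finset.le_sup' (fun e => lam e i) (Finset.mem_filter.2 ⟨he, hi.symm⟩)
  · intro h i
    refine Finset.sup'_le (hF.filter_nonempty (rb i)) _ fun e he => ?_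
    obtain ⟨he, hi⟩ := Finset.mem_filter.1 he
    exact h he i hi.symm

lemma eq_univ_of_cellLabel (h2 : ∀ e i, rb i = block e → lam e i ≤ c i)
    (h3 : ∀ e, ∃ i, rb i = block e ∧ ∀ e', e' ≠ e → block e' = block e → lam e' i < c i)
    {F : Finset E} {hF : MeetsBlocks block F} (h : (cellLabel rb lam h2 F hF).1 = c) :
    F = Finset.univ := by
  classical
  refine Finset.eq_univ_iff_forall.2 fun e => ?_
  by_contra he
  obtain ⟨i, hi, hlt⟩ := h3 e
  have : (cellLabel rb lam h2 F hF).1 i < c i := by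
    refine (Finset.sup'_lt_iff (hF.filter_nonempty (rb i))).2 fun e' he' => ?_
    obtain ⟨he', hi'⟩ := Finset.mem_filter.1 he'
    exact hlt e' (fun hh => he (hh ▸ he')) (hi'.trans hi)
  rw [h] at this
  exact lt_irrefl _ this

lemma cellLabel_univ (h2 : ∀ e i, rb i = block e → lam e i ≤ c i)
    (h4 : ∀ i, ∃ e, block e = rb i ∧ lam e i = c i)
    (hF : MeetsBlocks block (Finset.univ : Finset E)) :
    cellLabel rb lam h2 Finset.univ hF = ⟨c, le_refl c⟩ := by
  classical
  refine le_antisymm (fun i => (cellLabel rb lam h2 Finset.univ hF).2 i) fun i => ?_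
  obtain ⟨e, he, hc⟩ := h4 i
  change c i ≤ _
  rw [← hc]
  exact Finset.le_sup' (fun e => lam e i) (Finset.mem_filter.2 ⟨Finset.mem_univ _, he⟩)

/-- If the labelled product of simplices resolves the diagram `a ↦ [a + L is effective]`, and
the vector `c` is the label of its top cell only, then there is exactly one Betti number in
degree `c + L`, in the homological degree of the top cell. -/
theorem betti_eq_one (hres : IsMinimalGradedFreeResolution k L σ deg A p)
    (hmono : Monotone block)
    (h1 : ∀ a, a ≤ c → ((∃ l ∈ L, l ≤ a) ↔ ∀ i, ∃ e ∈ vertsBelow block rb lam a, block e = i))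
    (h2 : ∀ e i, rb i = block e → lam e i ≤ c i)
    (h3 : ∀ e, ∃ i, rb i = block e ∧ ∀ e', e' ≠ e → block e' = block e → lam e' i < c i)
    (h4 : ∀ i, ∃ e, block e = rb i ∧ lam e i = c i)
    (hsurj : Function.Surjective block) (j : ℕ)
    (hcard : Fintype.card E = j + 1 + Fintype.card ι) :
    Nat.card {g : σ (j + 1) // deg (j + 1) g = Submodule.Quotient.mk c} = 1 := by
  classical
  let cc : Set.Iic c := ⟨c, le_refl c⟩
  let F := strandResolution hres c
  let G := cellResolution k block hmono (fun a : Set.Iic c => vertsBelow block rb lam a.1)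
    (cellLabel rb lam h2) (cellLabel_le_iff h2)
  have hFG : LabelledResolution.AugLE F G := by
    intro x
    by_cases hx : F.ε (Finsupp.single x 1) = 0
    · exact ⟨0, Submodule.zero_mem _, by rw [map_zero, hx]⟩
    have hb := (h1 _ (F.lab 0 x).2).1 (strandResolution_aug hres c x hx)
    choose b hbA hb using hb
    have hbinj : Function.Injective b := fun i i' h => by rw [← hb i, h, hb]
    let y : G.X 0 := ⟨Finset.univ.image b, fun i => ⟨b i, by simp, hb i⟩, by
      rw [Finset.card_image_of_injective _ hbinj, Finset.card_univ, zero_add]⟩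
    refine ⟨Finsupp.single y (F.ε (Finsupp.single x 1)), Finsupp.single_mem_supported k _ ?_, ?_⟩
    · refine (cellLabel_le_iff h2 y.1 y.2.1 _).2 ?_
      intro e he
      obtain ⟨i, -, rfl⟩ := Finset.mem_image.1 (Finset.mem_coe.1 he)
      exact hbA i
    · change coeffSum k (cellInc k block 0 (Finsupp.single y _)) = _
      rw [cellInc_single]
      simp [coeffSum]
  have hGF : LabelledResolution.AugLE G F := by
    intro (x : Cell block 0)
    have he : G.ε (Finsupp.single x 1) = 1 := by
      change coeffSum k (cellInc k block 0 (Finsupp.single x 1)) = _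
      rw [cellInc_single]
      simp [coeffSum]
    rw [he]
    refine strandResolution_exists_aug hres c _ ((h1 _ (G.lab 0 x).2).2 fun i => ?_)
    obtain ⟨e, he, hi⟩ := x.2.1 i
    exact ⟨e, (cellLabel_le_iff h2 x.1 x.2.1 _).1 le_rfl he, hi⟩
  have huniv : ∀ l (x : Cell block l), G.lab l x = cc → x.1 = Finset.univ := fun l x hx =>
    eq_univ_of_cellLabel (hF := x.2.1) h2 h3 (congrArg Subtype.val hx)
  have hGmin : G.MinimalAt cc := by
    intro l (x : Cell block (l + 1)) (y : Cell block l) hx hy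
    have e1 := x.2.2
    have e2 := y.2.2
    rw [huniv _ x hx] at e1
    rw [huniv _ y hy] at e2
    omega
  have hFmin : F.MinimalAt cc := strandResolution_minimalAt hres c cc
  obtain ⟨eq⟩ := strandResolution_card hres c cc (j + 1)
  have : Finite {x : F.X (j + 1) // F.lab (j + 1) x = cc} := Finite.of_equiv _ eq.symm
  have : Finite {x : G.X (j + 1) // G.lab (j + 1) x = cc} := by
    have : Finite (G.X (j + 1)) := inferInstanceAs (Finite (Cell block (j + 1)))
    infer_instance
  have hle := LabelledResolution.card_le hFG hGF hFmin j
  have hge := LabelledResolution.card_le hGF hFG hGmin j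
  rw [Nat.card_congr eq] at hle hge
  have hG1 : Nat.card {x : G.X (j + 1) // G.lab (j + 1) x = cc} = 1 := by
    have hm : MeetsBlocks block (Finset.univ : Finset E) := fun i => by
      obtain ⟨e, he⟩ := hsurj i
      exact ⟨e, Finset.mem_univ _, he⟩
    rw [Nat.card_eq_one_iff_exists]
    refine ⟨⟨⟨Finset.univ, hm, by rw [Finset.card_univ, hcard]⟩, cellLabel_univ h2 h4 hm⟩, ?_⟩
    rintro ⟨x, hx⟩
    exact Subtype.ext (Subtype.ext (huniv (j + 1) x hx))
  exact le_antisymm (hle.trans hG1.le) (hG1.ge.trans hge)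

end Comparison

/-! ### Minimal resolutions are shortest -/

section ProjectiveDimension

variable {V : Type*} [Fintype V] {k : Type*} [Field k] {I : Ideal (MvPolynomial V k)}
  {σ : ℕ → Type} [∀ j, Fintype (σ j)]
  {A : ∀ j, Matrix (σ j) (σ (j + 1)) (MvPolynomial V k)} {p : σ 0 → MvPolynomial V k}
  {τ : ℕ → Type} [∀ j, Fintype (τ j)]
  {A' : ∀ j, Matrix (τ j) (τ (j + 1)) (MvPolynomial V k)} {p' : τ 0 → MvPolynomial V k}

lemma exists_free_lift {S X N M : Type*} [CommRing S] [Finite X] [AddCommGroup N] [Module S N]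
    [AddCommGroup M] [Module S M] (δ : N →ₗ[S] M) (θ : (X → S) →ₗ[S] M)
    (h : ∀ v, ∃ w, δ w = θ v) : ∃ φ : (X → S) →ₗ[S] N, ∀ v, δ (φ v) = θ v := by
  choose w hw using fun x => h (Pi.basisFun S X x)
  refine ⟨(Pi.basisFun S X).constr S w, fun v => ?_⟩
  have : δ ∘ₗ (Pi.basisFun S X).constr S w = θ :=
    (Pi.basisFun S X).ext fun x => by
      rw [LinearMap.comp_apply, Module.Basis.constr_basis, hw]
  exact LinearMap.congr_fun this v

/-- The augmentation `k[x]^{σ 0} → k[x]/I` of a free resolution. -/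
noncomputable def resAug (I : Ideal (MvPolynomial V k)) {X : Type} [Fintype X]
    (p : X → MvPolynomial V k) : (X → MvPolynomial V k) →ₗ[MvPolynomial V k] (MvPolynomial V k ⧸ I) :=
  (Submodule.mkQ I) ∘ₗ Fintype.linearCombination (MvPolynomial V k) p

lemma resAug_eq_zero {X : Type} [Fintype X] {p : X → MvPolynomial V k}
    (v : X → MvPolynomial V k) : resAug I p v = 0 ↔ ∑ g, v g * p g ∈ I := by
  simp only [resAug, LinearMap.comp_apply, Fintype.linearCombination_apply, smul_eq_mul]
  exact Submodule.Quotient.mk_eq_zero I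

lemma resAug_surjective (h : IsFreeResolution k I σ A p) : Function.Surjective (resAug I p) := by
  intro y
  obtain ⟨y, rfl⟩ := Submodule.mkQ_surjective I y
  have hy : y ∈ Ideal.span (Set.range p) ⊔ I := by rw [h.1]; trivial
  obtain ⟨a, ha, b, hb, rfl⟩ := Submodule.mem_sup.1 hy
  obtain ⟨v, rfl⟩ := (Submodule.mem_span_range_iff_exists_fun _).1 ha
  refine ⟨v, ?_⟩
  simp only [resAug, LinearMap.comp_apply, Fintype.linearCombination_apply]
  rw [map_add, (Submodule.Quotient.mk_eq_zero I).2 hb |> fun h => (show I.mkQ b = 0 from h),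
    add_zero]

/-- The elements of degree `j` killed by the differential (by the augmentation if `j = 0`). -/
noncomputable def resCycles (I : Ideal (MvPolynomial V k))
    (A : ∀ j, Matrix (σ j) (σ (j + 1)) (MvPolynomial V k)) (p : σ 0 → MvPolynomial V k) :
    ∀ j, Submodule (MvPolynomial V k) (σ j → MvPolynomial V k)
  | 0 => LinearMap.ker (resAug I p)
  | j + 1 => LinearMap.ker (A j).mulVecLin

lemma resCycles_eq_range (h : IsFreeResolution k I σ A p) (j : ℕ) :
    resCycles I A p j = LinearMap.range (A j).mulVecLin := by
  cases j with
  | zero =>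
    ext v
    rw [← h.2.1 v, resCycles, LinearMap.mem_ker, resAug_eq_zero]
  | succ j => exact h.2.2 j

/-- The comparison theorem: two free resolutions are related by a chain map over the identity. -/
lemma exists_resChainMap (h : IsFreeResolution k I σ A p) (h' : IsFreeResolution k I τ A' p') :
    ∃ φ : ∀ j, (σ j → MvPolynomial V k) →ₗ[MvPolynomial V k] (τ j → MvPolynomial V k),
      (∀ v, resAug I p' (φ 0 v) = resAug I p v) ∧
      ∀ j v, (A' j).mulVecLin (φ (j + 1) v) = φ j ((A j).mulVecLin v) := by
  obtain ⟨φ₀, hφ₀⟩ := exists_free_lift (resAug I p') (resAug I p)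
    fun v => resAug_surjective h' _
  let Good : ∀ j, ((σ j → MvPolynomial V k) →ₗ[MvPolynomial V k] (τ j → MvPolynomial V k)) →
    Prop := fun j φ => ∀ v ∈ resCycles I A p j, φ v ∈ resCycles I A' p' j
  have step : ∀ j (φ : {φ // Good j φ}), ∃ φ' : {φ' // Good (j + 1) φ'},
      ∀ v, (A' j).mulVecLin (φ'.1 v) = φ.1 ((A j).mulVecLin v) := by
    rintro j ⟨φ, hc⟩
    obtain ⟨φ', h2⟩ := exists_free_lift (A' j).mulVecLin (φ ∘ₗ (A j).mulVecLin) (fun v => by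
      have : φ ((A j).mulVecLin v) ∈ resCycles I A' p' j :=
        hc _ (by rw [resCycles_eq_range h]; exact ⟨v, rfl⟩)
      rw [resCycles_eq_range h'] at this
      exact this)
    refine ⟨⟨φ', fun v hv => ?_⟩, h2⟩
    change (A' j).mulVecLin (φ' v) = 0
    have hv : (A j).mulVecLin v = 0 := hv
    rw [h2, LinearMap.comp_apply, hv, map_zero]
  choose next hnext using step
  let seq : ∀ j, {φ // Good j φ} := fun j => Nat.rec
    ⟨φ₀, fun v hv => by
      change resAug I p' (φ₀ v) = 0
      rw [hφ₀]
      exact hv⟩ (fun j φ => next j φ) j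
  exact ⟨fun j => (seq j).1, hφ₀, fun j v => hnext j (seq j) v⟩

/-- A chain endomorphism over the identity is homotopic to the identity. -/
lemma exists_resHomotopy (h : IsFreeResolution k I σ A p)
    (ψ : ∀ j, (σ j → MvPolynomial V k) →ₗ[MvPolynomial V k] (σ j → MvPolynomial V k))
    (h0 : ∀ v, resAug I p (ψ 0 v) = resAug I p v)
    (hψ : ∀ j v, (A j).mulVecLin (ψ (j + 1) v) = ψ j ((A j).mulVecLin v)) (j : ℕ) :
    ∃ (s : (σ j → MvPolynomial V k) →ₗ[MvPolynomial V k] (σ (j + 1) → MvPolynomial V k))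
      (s' : (σ (j + 1) → MvPolynomial V k) →ₗ[MvPolynomial V k] (σ (j + 2) → MvPolynomial V k)),
      ∀ v, v - ψ (j + 1) v = (A (j + 1)).mulVecLin (s' v) + s ((A j).mulVecLin v) := by
  have next : ∀ j (s : (σ j → MvPolynomial V k) →ₗ[MvPolynomial V k]
      (σ (j + 1) → MvPolynomial V k)),
      (∀ v ∈ resCycles I A p j, v - ψ j v = (A j).mulVecLin (s v)) →
      ∃ s' : (σ (j + 1) → MvPolynomial V k) →ₗ[MvPolynomial V k] (σ (j + 2) → MvPolynomial V k),
      ∀ v, v - ψ (j + 1) v = (A (j + 1)).mulVecLin (s' v) + s ((A j).mulVecLin v) := by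
    intro j s hs
    obtain ⟨s', hs'⟩ := exists_free_lift (A (j + 1)).mulVecLin
      (LinearMap.id - ψ (j + 1) - s ∘ₗ (A j).mulVecLin) (fun v => by
        change _ ∈ LinearMap.range (A (j + 1)).mulVecLin
        rw [← h.2.2 j, LinearMap.mem_ker]
        have hz : (A j).mulVecLin v ∈ resCycles I A p j := by
          rw [resCycles_eq_range h]; exact ⟨v, rfl⟩
        have := hs _ hz
        simp only [LinearMap.sub_apply, LinearMap.id_apply, LinearMap.comp_apply, map_sub, hψ]
        rw [← this, sub_self])
    refine ⟨s', fun v => ?_⟩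
    rw [hs']
    simp
  have ex : ∀ j, ∃ s : (σ j → MvPolynomial V k) →ₗ[MvPolynomial V k]
      (σ (j + 1) → MvPolynomial V k),
      ∀ v ∈ resCycles I A p j, v - ψ j v = (A j).mulVecLin (s v) := by
    intro j
    induction j with
    | zero =>
      obtain ⟨s, hs⟩ := exists_free_lift (A 0).mulVecLin (LinearMap.id - ψ 0) (fun v => by
        change _ ∈ LinearMap.range (A 0).mulVecLin
        rw [← resCycles_eq_range h 0, resCycles, LinearMap.mem_ker, LinearMap.sub_apply, map_sub, h0,
          LinearMap.id_apply, sub_self])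
      exact ⟨s, fun v _ => by rw [hs]; simp⟩
    | succ j ih =>
      obtain ⟨s, hs⟩ := ih
      obtain ⟨s', hs'⟩ := next j s hs
      refine ⟨s', fun v hv => ?_⟩
      have hv : (A j).mulVecLin v = 0 := hv
      rw [hs', hv, map_zero, add_zero]
  obtain ⟨s, hs⟩ := ex j
  obtain ⟨s', hs'⟩ := next j s hs
  exact ⟨s, s', hs'⟩

/-- A minimal resolution is as short as possible: if it has a generator in degree `m + 1`, there
is no free resolution of length `m`.  Otherwise the identity in degree `m + 1` would be
homotopic to zero, hence have entries without constant terms. -/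
theorem not_hasFreeResolutionOfLength (h : IsFreeResolution k I σ A p)
    (hmin : ∀ j g f, coeff 0 (A j g f) = 0) {m : ℕ} (g : σ (m + 1)) :
    ¬ HasFreeResolutionOfLength k I m := by
  classical
  rintro ⟨τ, hfin, A', p', hempty, h'⟩
  obtain ⟨φ, hφ0, hφ⟩ := exists_resChainMap h h'
  obtain ⟨φ', hφ'0, hφ'⟩ := exists_resChainMap h' h
  obtain ⟨s, s', hs⟩ := exists_resHomotopy h (fun j => φ' j ∘ₗ φ j)
    (fun v => by rw [LinearMap.comp_apply, hφ'0, hφ0])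
    (fun j v => by rw [LinearMap.comp_apply, hφ', hφ]; rfl) m
  have : IsEmpty (τ (m + 1)) := hempty (m + 1) (Nat.lt_succ_self m)
  have hc : ∀ j (v : σ (j + 1) → MvPolynomial V k) i,
      constantCoeff ((A j).mulVecLin v i) = 0 := by
    intro j v i
    simp only [Matrix.mulVecLin_apply, Matrix.mulVec, dotProduct, map_sum, map_mul]
    refine Finset.sum_eq_zero fun f _ => ?_
    rw [constantCoeff_eq, hmin, zero_mul]
  have hsc : ∀ v : σ m → MvPolynomial V k, (∀ i, constantCoeff (v i) = 0) →
      constantCoeff (s v g) = 0 := by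
    intro v hv
    rw [← (Pi.basisFun (MvPolynomial V k) (σ m)).sum_repr v, map_sum, Finset.sum_apply, map_sum]
    refine Finset.sum_eq_zero fun i _ => ?_
    rw [map_smul, Pi.smul_apply, smul_eq_mul, map_mul, Pi.basisFun_repr, hv, zero_mul]
  have key := congrArg constantCoeff (congrFun (hs (Pi.single g 1)) g)
  have hz : φ (m + 1) (Pi.single g 1) = 0 := Subsingleton.elim _ _
  rw [LinearMap.comp_apply, hz, map_zero, sub_zero, Pi.single_eq_same, Pi.add_apply, map_add, hc,
    hsc _ (hc m _)] at key
  simp at key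

end ProjectiveDimension

/-! ### The suspended matrix -/

section Suspension

lemma mul_le_max_zero {a x : ℤ} (h0 : 0 ≤ x) (h1 : x ≤ 1) : a * x ≤ max a 0 := by
  obtain rfl | rfl : x = 0 ∨ x = 1 := by omega
  · simp
  · simp

/-- The four inequalities, one for each quadrant, confine the first coordinate to `{0, 1}`. By
symmetry they do the same for the second one, see `mem_square`. -/
lemma fst_mem_of_quadrants {p1 p2 q1 q2 r1 r2 s1 s2 x y : ℤ} (hp1 : 0 < p1) (hp2 : 0 < p2)
    (hq1 : 0 < q1) (hq2 : q2 < 0) (hr1 : r1 < 0) (hr2 : 0 < r2) (hs1 : s1 < 0) (hs2 : s2 < 0)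
    (hp : p1 * x + p2 * y ≤ p1 + p2) (hq : q1 * x + q2 * y ≤ q1) (hr : r1 * x + r2 * y ≤ r2)
    (hs : s1 * x + s2 * y ≤ 0) : 0 ≤ x ∧ x ≤ 1 := by
  constructor
  · by_contra hx
    have hx : x ≤ -1 := by omega
    have hy : 0 < y := by
      by_contra hy
      nlinarith [mul_nonneg_of_nonpos_of_nonpos hs2.le (not_lt.1 hy), mul_pos_of_neg_of_neg hs1 (by omega : x < 0)]
    nlinarith [mul_pos_of_neg_of_neg hr1 (by omega : x < 0), mul_nonneg hr2.le (by omega : 0 ≤ y - 1)]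
  · by_contra hx
    have hx : 0 < x - 1 := by omega
    have hy : y ≤ 0 := by
      by_contra hy
      nlinarith [mul_nonneg hp2.le (by omega : 0 ≤ y - 1), mul_pos hp1 hx]
    nlinarith [mul_pos hq1 hx, mul_nonneg_of_nonpos_of_nonpos hq2.le hy]

lemma mem_square {n : ℕ} {B₀ : Matrix (Fin n) (Fin 2) ℤ} (hquad : MeetsFourQuadrants B₀) {x y : ℤ}
    (h : ∀ i, B₀ i 0 * x + B₀ i 1 * y ≤ max (B₀ i 0) 0 + max (B₀ i 1) 0) :
    (0 ≤ x ∧ x ≤ 1) ∧ 0 ≤ y ∧ y ≤ 1 := by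
  obtain ⟨⟨p, hp1, hp2⟩, ⟨q, hq1, hq2⟩, ⟨r, hr1, hr2⟩, ⟨s, hs1, hs2⟩⟩ := hquad
  have hp := h p
  have hq := h q
  have hr := h r
  have hs := h s
  rw [max_eq_left hp1.le, max_eq_left hp2.le] at hp
  rw [max_eq_left hq1.le, max_eq_right hq2.le, add_zero] at hq
  rw [max_eq_right hr1.le, max_eq_left hr2.le, zero_add] at hr
  rw [max_eq_right hs1.le, max_eq_right hs2.le, add_zero] at hs
  refine ⟨fst_mem_of_quadrants hp1 hp2 hq1 hq2 hr1 hr2 hs1 hs2 hp hq hr hs,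
    fst_mem_of_quadrants (x := y) (y := x) hp2 hp1 hr2 hr1 hq2 hq1 hs2 hs1 ?_ ?_ ?_ ?_⟩ <;> linarith

/-- Every vertex of the unit square is the unique maximizer, over the vertices, of the linear form
given by some row of `B₀`. -/
lemma exists_row_lt {n : ℕ} {B₀ : Matrix (Fin n) (Fin 2) ℤ} (hquad : MeetsFourQuadrants B₀)
    {x y : ℤ} (hx : 0 ≤ x ∧ x ≤ 1) (hy : 0 ≤ y ∧ y ≤ 1) :
    ∃ i, ∀ x' y' : ℤ, (0 ≤ x' ∧ x' ≤ 1) → (0 ≤ y' ∧ y' ≤ 1) → (x' ≠ x ∨ y' ≠ y) →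
      B₀ i 0 * x' + B₀ i 1 * y' < max (B₀ i 0) 0 + max (B₀ i 1) 0 := by
  obtain ⟨⟨p, hp1, hp2⟩, ⟨q, hq1, hq2⟩, ⟨r, hr1, hr2⟩, ⟨s, hs1, hs2⟩⟩ := hquad
  have hx : x = 0 ∨ x = 1 := by omega
  have hy : y = 0 ∨ y = 1 := by omega
  rcases hx with rfl | rfl <;> rcases hy with rfl | rfl
  on_goal 1 => refine ⟨s, fun x' y' hx' hy' hne => ?_⟩
  on_goal 2 => refine ⟨r, fun x' y' hx' hy' hne => ?_⟩
  on_goal 3 => refine ⟨q, fun x' y' hx' hy' hne => ?_⟩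
  on_goal 4 => refine ⟨p, fun x' y' hx' hy' hne => ?_⟩
  all_goals
    have hx' : x' = 0 ∨ x' = 1 := by omega
    have hy' : y' = 0 ∨ y' = 1 := by omega
    rcases hx' with rfl | rfl <;> rcases hy' with rfl | rfl <;> simp at hne ⊢ <;> omega

variable {n m : ℕ}

/-- The nonzero entry of the row `i ≥ n` of the suspended matrix. -/
def rowSign (n : ℕ) (i : ℕ) : ℤ := if (i - n) % 2 = 0 then 1 else -1

/-- `B` is block diagonal with blocks `B₀, H, …, H`, where `H = (1, -1)ᵀ`. -/
def IsSuspension (B₀ : Matrix (Fin n) (Fin 2) ℤ) (B : Matrix (Fin (n + 2 * (m - 2))) (Fin m) ℤ) :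
    Prop :=
  ∀ i j, B i j =
      if hi : (i : ℕ) < n then
        (if hj : (j : ℕ) < 2 then B₀ ⟨(i : ℕ), hi⟩ ⟨(j : ℕ), hj⟩ else 0)
      else
        if (j : ℕ) = 2 + ((i : ℕ) - n) / 2 then
          (if ((i : ℕ) - n) % 2 = 0 then 1 else -1)
        else 0

variable {B₀ : Matrix (Fin n) (Fin 2) ℤ} {B : Matrix (Fin (n + 2 * (m - 2))) (Fin m) ℤ}

lemma IsSuspension.apply_hi (hB : IsSuspension B₀ B) {i : Fin (n + 2 * (m - 2))}
    (hi : ¬ (i : ℕ) < n) (j : Fin m) :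
    B i j = if (j : ℕ) = 2 + ((i : ℕ) - n) / 2 then rowSign n i else 0 := by
  rw [hB, dif_neg hi, rowSign]

lemma IsSuspension.sum_lo (hm : 2 < m) (hB : IsSuspension B₀ B) {i : Fin (n + 2 * (m - 2))}
    (hi : (i : ℕ) < n) (f : Fin m → ℤ → ℤ) (hf : ∀ j, f j 0 = 0) :
    ∑ j, f j (B i j) = f ⟨0, by omega⟩ (B₀ ⟨i, hi⟩ 0) + f ⟨1, by omega⟩ (B₀ ⟨i, hi⟩ 1) := by
  rw [Finset.sum_eq_add (⟨0, by omega⟩ : Fin m) ⟨1, by omega⟩ (by simp)]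
  · simp [hB i, hi]
  · rintro j - ⟨h0, h1⟩
    have : ¬ (j : ℕ) < 2 := by
      intro h
      have : (j : ℕ) ≠ 0 := fun h => h0 (Fin.ext h)
      have : (j : ℕ) ≠ 1 := fun h => h1 (Fin.ext h)
      omega
    rw [hB, dif_pos hi, dif_neg this, hf]
  · simp
  · simp

lemma IsSuspension.sum_hi (hm : 2 < m) (hB : IsSuspension B₀ B) {i : Fin (n + 2 * (m - 2))}
    (hi : ¬ (i : ℕ) < n) (f : Fin m → ℤ → ℤ) (hf : ∀ j, f j 0 = 0) :
    ∑ j, f j (B i j) = f ⟨2 + (i - n) / 2, by omega⟩ (rowSign n i) := by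
  rw [Finset.sum_eq_single (⟨2 + (i - n) / 2, by omega⟩ : Fin m)]
  · rw [hB.apply_hi hi, if_pos rfl]
  · intro j _ hj
    rw [hB.apply_hi hi, if_neg (fun h => hj (Fin.ext h)), hf]
  · simp

lemma IsSuspension.mulVec_lo (hm : 2 < m) (hB : IsSuspension B₀ B) {i : Fin (n + 2 * (m - 2))}
    (hi : (i : ℕ) < n) (t : Fin m → ℤ) :
    B.mulVecLin t i = B₀ ⟨i, hi⟩ 0 * t ⟨0, by omega⟩ + B₀ ⟨i, hi⟩ 1 * t ⟨1, by omega⟩ :=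
  hB.sum_lo hm hi (fun j b => b * t j) (by simp)

lemma IsSuspension.mulVec_hi (hm : 2 < m) (hB : IsSuspension B₀ B) {i : Fin (n + 2 * (m - 2))}
    (hi : ¬ (i : ℕ) < n) (t : Fin m → ℤ) :
    B.mulVecLin t i = rowSign n i * t ⟨2 + (i - n) / 2, by omega⟩ :=
  hB.sum_hi hm hi (fun j b => b * t j) (by simp)

/-- The representative `(B_1)_+ + ⋯ + (B_m)_+` of the fiber. -/
def posSum (B : Matrix (Fin (n + 2 * (m - 2))) (Fin m) ℤ) : Fin (n + 2 * (m - 2)) → ℤ :=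
  fun i => ∑ j, max (B i j) 0

lemma IsSuspension.posSum_lo (hm : 2 < m) (hB : IsSuspension B₀ B) {i : Fin (n + 2 * (m - 2))}
    (hi : (i : ℕ) < n) :
    posSum B i = max (B₀ ⟨i, hi⟩ 0) 0 + max (B₀ ⟨i, hi⟩ 1) 0 :=
  hB.sum_lo hm hi (fun _ b => max b 0) (by simp)

lemma IsSuspension.posSum_hi (hm : 2 < m) (hB : IsSuspension B₀ B) {i : Fin (n + 2 * (m - 2))}
    (hi : ¬ (i : ℕ) < n) : posSum B i = max (rowSign n i) 0 :=
  hB.sum_hi hm hi (fun _ b => max b 0) (by simp)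

/-- The only lattice points `B t` below `posSum B` are those with `t` in the unit cube. -/
lemma IsSuspension.mem_cube (hm : 2 < m) (hB : IsSuspension B₀ B) (hquad : MeetsFourQuadrants B₀)
    {t : Fin m → ℤ} (ht : B.mulVecLin t ≤ posSum B) (j : Fin m) : 0 ≤ t j ∧ t j ≤ 1 := by
  have hsq := mem_square hquad (x := t ⟨0, by omega⟩) (y := t ⟨1, by omega⟩) fun i => by
    have := ht ⟨i, by omega⟩
    rwa [hB.mulVec_lo hm i.2, hB.posSum_lo hm i.2] at this
  obtain ⟨j, hj⟩ := j
  obtain rfl | rfl | h2 : j = 0 ∨ j = 1 ∨ 2 ≤ j := by omega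
  · exact hsq.1
  · exact hsq.2
  have e0 : (n + 2 * (j - 2)) % 2 = n % 2 := by omega
  have h0 := ht ⟨n + 2 * (j - 2), by omega⟩
  have h1 := ht ⟨n + 2 * (j - 2) + 1, by omega⟩
  rw [hB.mulVec_hi hm (by simp), hB.posSum_hi hm (by simp)] at h0
  rw [hB.mulVec_hi hm (by simp; omega), hB.posSum_hi hm (by simp; omega)] at h1
  have s0 : rowSign n (n + 2 * (j - 2)) = 1 := if_pos (by omega)
  have s1 : rowSign n (n + 2 * (j - 2) + 1) = -1 := if_neg (by omega)
  have i0 : (⟨2 + (n + 2 * (j - 2) - n) / 2, by omega⟩ : Fin m) = ⟨j, hj⟩ := Fin.ext (by simp; omega)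
  have i1 : (⟨2 + (n + 2 * (j - 2) + 1 - n) / 2, by omega⟩ : Fin m) = ⟨j, hj⟩ :=
    Fin.ext (by simp; omega)
  simp only [s0, i0, s1, i1] at h0 h1
  norm_num at h0 h1
  exact ⟨h1, h0⟩

theorem IsSuspension.latticeRank_eq (hm : 2 < m) (hB : IsSuspension B₀ B)
    (hquad : MeetsFourQuadrants B₀) : latticeRank (colSpan B) = m := by
  have hc : (0 : Fin (n + 2 * (m - 2)) → ℤ) ≤ posSum B := fun i =>
    Finset.sum_nonneg fun j _ => le_max_right _ _
  have hinj : Function.Injective B.mulVecLin := by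
    refine (injective_iff_map_eq_zero _).2 fun t ht => funext fun j => ?_
    have h1 := hB.mem_cube hm hquad (t := t) (by rw [ht]; exact hc) j
    have h2 := hB.mem_cube hm hquad (t := -t) (by rw [map_neg, ht, neg_zero]; exact hc) j
    simp only [Pi.neg_apply] at h2
    simp only [Pi.zero_apply]
    omega
  rw [latticeRank, colSpan, LinearMap.finrank_range_of_inj hinj, Module.finrank_fin_fun]

/-- The factor of the product of simplices to which a vertex belongs: the vertices `0, 1, 2, 3`
form a tetrahedron and `2 j, 2 j + 1` form a segment for `2 ≤ j < m`. -/
def suspBlock (hm : 2 < m) (e : Fin (2 * m)) : Fin (m - 1) := ⟨e / 2 - 1, by omega⟩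

/-- The factor corresponding to the diagonal block of `B` which contains a row. -/
def suspRow (hm : 2 < m) (i : Fin (n + 2 * (m - 2))) : Fin (m - 1) :=
  ⟨if (i : ℕ) < n then 0 else 1 + (i - n) / 2, by split <;> omega⟩

/-- The labels: a vertex `e < 4` stands for the vertex `(e % 2, e / 2)` of the unit square, and
`e ≥ 4` for the vertex `e % 2` of the `e / 2`-th unit interval; the label is its image under the
corresponding block of `B`. -/
def suspLabel (B₀ : Matrix (Fin n) (Fin 2) ℤ) (e : Fin (2 * m)) (i : Fin (n + 2 * (m - 2))) : ℤ :=
  if hi : (i : ℕ) < n then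
    B₀ ⟨i, hi⟩ 0 * ((e : ℕ) % 2 : ℕ) + B₀ ⟨i, hi⟩ 1 * ((e : ℕ) / 2 : ℕ)
  else rowSign n i * ((e : ℕ) % 2 : ℕ)

lemma suspLabel_le (hm : 2 < m) (hB : IsSuspension B₀ B) (e : Fin (2 * m))
    (i : Fin (n + 2 * (m - 2))) (h : suspRow hm i = suspBlock hm e) :
    suspLabel B₀ e i ≤ posSum B i := by
  simp only [suspRow, suspBlock, Fin.mk.injEq] at h
  rw [suspLabel]
  split_ifs with hi
  · rw [if_pos hi] at h
    rw [hB.posSum_lo hm hi]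
    exact add_le_add (mul_le_max_zero (by omega) (by omega)) (mul_le_max_zero (by omega) (by omega))
  · rw [hB.posSum_hi hm hi]
    exact mul_le_max_zero (by omega) (by omega)

lemma exists_suspLabel_lt (hm : 2 < m) (hB : IsSuspension B₀ B) (hquad : MeetsFourQuadrants B₀)
    (e : Fin (2 * m)) : ∃ i, suspRow hm i = suspBlock hm e ∧ ∀ e', e' ≠ e →
      suspBlock hm e' = suspBlock hm e → suspLabel B₀ e' i < posSum B i := by
  by_cases he : (e : ℕ) < 4
  · obtain ⟨i, hi⟩ := exists_row_lt hquad (x := ((e : ℕ) % 2 : ℕ)) (y := ((e : ℕ) / 2 : ℕ))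
      (by omega) (by omega)
    refine ⟨⟨i, by omega⟩, ?_, fun e' hne hb => ?_⟩
    · simp only [suspRow, suspBlock, Fin.mk.injEq]
      rw [if_pos i.2]
      omega
    · simp only [suspBlock, Fin.mk.injEq] at hb
      have hne : (e' : ℕ) ≠ e := fun h => hne (Fin.ext h)
      rw [suspLabel, dif_pos i.2, hB.posSum_lo hm i.2]
      exact hi _ _ (by omega) (by omega) (by omega)
  · refine ⟨⟨n + 2 * (e / 2 - 2) + (1 - e % 2), by omega⟩, ?_, fun e' hne hb => ?_⟩
    · simp only [suspRow, suspBlock, Fin.mk.injEq]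
      rw [if_neg (by omega)]
      omega
    · simp only [suspBlock, Fin.mk.injEq] at hb
      have hne : (e' : ℕ) ≠ e := fun h => hne (Fin.ext h)
      have hlt : ¬ n + 2 * ((e : ℕ) / 2 - 2) + (1 - e % 2) < n := by omega
      rw [suspLabel, dif_neg hlt, hB.posSum_hi hm hlt]
      simp only [rowSign]
      obtain h0 | h1 : (e : ℕ) % 2 = 0 ∨ (e : ℕ) % 2 = 1 := by omega
      · rw [if_neg (by omega), show (e' : ℕ) % 2 = 1 by omega]
        norm_num
      · rw [if_pos (by omega), show (e' : ℕ) % 2 = 0 by omega]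
        norm_num

lemma exists_suspLabel_eq (hm : 2 < m) (hB : IsSuspension B₀ B) (i : Fin (n + 2 * (m - 2))) :
    ∃ e, suspBlock hm e = suspRow hm i ∧ suspLabel B₀ e i = posSum B i := by
  have hpick : ∀ a : ℤ, ∃ x : ℕ, x < 2 ∧ a * x = max a 0 := fun a => by
    rcases le_total a 0 with h | h
    · exact ⟨0, by omega, by simp [h]⟩
    · exact ⟨1, by omega, by simp [h]⟩
  by_cases hi : (i : ℕ) < n
  · obtain ⟨x, hx, hx'⟩ := hpick (B₀ ⟨i, hi⟩ 0)
    obtain ⟨y, hy, hy'⟩ := hpick (B₀ ⟨i, hi⟩ 1)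
    refine ⟨⟨x + 2 * y, by omega⟩, ?_, ?_⟩
    · simp only [suspRow, suspBlock, Fin.mk.injEq]
      rw [if_pos hi]
      omega
    · rw [suspLabel, dif_pos hi, hB.posSum_lo hm hi, ← hx', ← hy']
      simp only [show (x + 2 * y) % 2 = x by omega, show (x + 2 * y) / 2 = y by omega]
  · obtain ⟨x, hx, hx'⟩ := hpick (rowSign n i)
    refine ⟨⟨2 * (2 + (i - n) / 2) + x, by omega⟩, ?_, ?_⟩
    · simp only [suspRow, suspBlock, Fin.mk.injEq]
      rw [if_neg hi]
      omega
    · rw [suspLabel, dif_neg hi, hB.posSum_hi hm hi, ← hx']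
      simp only [show (2 * (2 + ((i : ℕ) - n) / 2) + x) % 2 = x by omega]

/-- For `a ≤ posSum B`, there is a lattice point below `a` if and only if every factor of the
product has a vertex whose label is below `a`. -/
lemma exists_le_iff_vertsBelow (hm : 2 < m) (hB : IsSuspension B₀ B)
    (hquad : MeetsFourQuadrants B₀) (a : Fin (n + 2 * (m - 2)) → ℤ) (ha : a ≤ posSum B) :
    (∃ l ∈ colSpan B, l ≤ a) ↔
      ∀ i, ∃ e ∈ vertsBelow (suspBlock hm) (suspRow hm) (suspLabel B₀) a, suspBlock hm e = i := by
  constructor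
  · rintro ⟨_, ⟨t, rfl⟩, hl⟩ i
    have ht := hB.mem_cube hm hquad (hl.trans ha)
    by_cases h0 : (i : ℕ) = 0
    · have hx := ht ⟨0, by omega⟩
      have hy := ht ⟨1, by omega⟩
      refine ⟨⟨(t ⟨0, by omega⟩).toNat + 2 * (t ⟨1, by omega⟩).toNat, by omega⟩, fun i' hi' => ?_,
        Fin.ext ?_⟩
      · simp only [suspRow, suspBlock, Fin.mk.injEq] at hi'
        have hlo : (i' : ℕ) < n := by
          by_contra hh
          rw [if_neg hh] at hi'
          omega
        have := hl i'
        rw [hB.mulVec_lo hm hlo] at this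
        rw [suspLabel, dif_pos hlo]
        convert this using 3 <;> simp only <;> omega
      · simp only [suspBlock]
        omega
    · have hx := ht ⟨i + 1, by omega⟩
      refine ⟨⟨2 * (i + 1) + (t ⟨i + 1, by omega⟩).toNat, by omega⟩, fun i' hi' => ?_,
        Fin.ext ?_⟩
      · simp only [suspRow, suspBlock, Fin.mk.injEq] at hi'
        have hhi : ¬ (i' : ℕ) < n := by
          intro hh
          rw [if_pos hh] at hi'
          omega
        rw [if_neg hhi] at hi'
        have := hl i'
        rw [hB.mulVec_hi hm hhi] at this
        rw [suspLabel, dif_neg hhi]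
        have e1 : (⟨2 + (i' - n) / 2, by omega⟩ : Fin m) = ⟨i + 1, by omega⟩ :=
          Fin.ext (by simp only; omega)
        rw [e1] at this
        convert this using 2
        simp only
        omega
      · simp only [suspBlock]
        omega
  · intro h
    choose e he hb using h
    have hb' : ∀ i, (e i : ℕ) / 2 - 1 = i := fun i => congrArg Fin.val (hb i)
    let t : Fin m → ℤ := fun j =>
      if (j : ℕ) = 0 then (((e ⟨0, by omega⟩ : ℕ) % 2 : ℕ) : ℤ)
      else if (j : ℕ) = 1 then (((e ⟨0, by omega⟩ : ℕ) / 2 : ℕ) : ℤ)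
      else (((e ⟨j - 1, by omega⟩ : ℕ) % 2 : ℕ) : ℤ)
    refine ⟨B.mulVecLin t, ⟨t, rfl⟩, fun i => ?_⟩
    by_cases hi : (i : ℕ) < n
    · have := he ⟨0, by omega⟩ i (by rw [hb]; simp [suspRow, hi])
      rw [suspLabel, dif_pos hi] at this
      rw [hB.mulVec_lo hm hi]
      exact this
    · have := he ⟨1 + (i - n) / 2, by omega⟩ i (by rw [hb]; simp [suspRow, hi])
      rw [suspLabel, dif_neg hi] at this
      rw [hB.mulVec_hi hm hi]
      have e2 : t ⟨2 + (i - n) / 2, by omega⟩ =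
          (((e ⟨1 + (i - n) / 2, by omega⟩ : ℕ) % 2 : ℕ) : ℤ) := by
        simp only [t]
        rw [if_neg (by omega), if_neg (by omega)]
        congr 5
        omega
      rw [e2]
      exact this

theorem IsSuspension.betti_eq_one (hm : 2 < m) (hB : IsSuspension B₀ B)
    (hquad : MeetsFourQuadrants B₀) {k : Type*} [Field k]
    {σ : ℕ → Type} [∀ i, Fintype (σ i)]
    {deg : ∀ i, σ i → ((Fin (n + 2 * (m - 2)) → ℤ) ⧸ colSpan B)}
    {A : ∀ i, Matrix (σ i) (σ (i + 1)) (MvPolynomial (Fin (n + 2 * (m - 2))) k)}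
    {p : σ 0 → MvPolynomial (Fin (n + 2 * (m - 2))) k}
    (hres : IsMinimalGradedFreeResolution k (colSpan B) σ deg A p) :
    Nat.card {g : σ (m + 1) // deg (m + 1) g = Submodule.Quotient.mk (posSum B)} = 1 := by
  refine _root_.betti_eq_one hres (block := suspBlock hm) (rb := suspRow hm)
    (lam := suspLabel B₀) ?_ (exists_le_iff_vertsBelow hm hB hquad)
    (suspLabel_le hm hB) (exists_suspLabel_lt hm hB hquad) (exists_suspLabel_eq hm hB) ?_ m ?_
  · intro e e' h
    have h : (e : ℕ) ≤ e' := h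
    change (e : ℕ) / 2 - 1 ≤ (e' : ℕ) / 2 - 1
    omega
  · intro i
    refine ⟨⟨2 * (i + 1), by omega⟩, Fin.ext ?_⟩
    simp only [suspBlock]
    omega
  · rw [Fintype.card_fin, Fintype.card_fin]
    omega

end Suspension

/-- Proposition `prop:nonCMSuspension`: let `B∘ ∈ ℤ^{n×2}` have
rank 2, `ℤB∘` positive, rows meeting all four open quadrants, and for `m > 2` let `B`
be the block-diagonal matrix with blocks `B∘, H, …, H` (`m − 2` copies of
`H = (1,−1)ᵀ`).  If `C` is the fiber containing `(B₁)₊ + ⋯ + (B_m)₊` then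
`β_{m+1,C}(k[x]/I_{ℤB}) = 1`; consequently the quotient (of codimension `m`) is not
Cohen–Macaulay. -/
theorem statement11 (k : Type*) [Field k] {n m : ℕ} (hm : 2 < m)
    (B₀ : Matrix (Fin n) (Fin 2) ℤ) (hrank₀ : B₀.rank = 2)
    (hpos₀ : IsPositiveLattice (colSpan B₀)) (hquad : MeetsFourQuadrants B₀)
    (B : Matrix (Fin (n + 2 * (m - 2))) (Fin m) ℤ)
    (hB : ∀ i j, B i j =
      if hi : (i : ℕ) < n then
        (if hj : (j : ℕ) < 2 then B₀ ⟨(i : ℕ), hi⟩ ⟨(j : ℕ), hj⟩ else 0)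
      else
        if (j : ℕ) = 2 + ((i : ℕ) - n) / 2 then
          (if ((i : ℕ) - n) % 2 = 0 then 1 else -1)
        else 0)
    (σ : ℕ → Type) [∀ i, Fintype (σ i)]
    (deg : ∀ i, σ i → ((Fin (n + 2 * (m - 2)) → ℤ) ⧸ colSpan B))
    (A : ∀ i, Matrix (σ i) (σ (i + 1)) (MvPolynomial (Fin (n + 2 * (m - 2))) k))
    (p : σ 0 → MvPolynomial (Fin (n + 2 * (m - 2))) k)
    (hres : IsMinimalGradedFreeResolution k (colSpan B) σ deg A p) :
    Nat.card {g : σ (m + 1) // deg (m + 1) g =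
        Submodule.Quotient.mk fun i => ∑ j, max (B i j) 0} = 1 ∧
      latticeRank (colSpan B) = m ∧
      ¬ HasFreeResolutionOfLength k (latticeIdeal k (colSpan B)) m := by
  have hsusp : IsSuspension B₀ B := hB
  have h1 := hsusp.betti_eq_one hm hquad hres
  obtain ⟨g, -⟩ := Nat.card_eq_one_iff_exists.1 h1
  exact ⟨h1, hsusp.latticeRank_eq hm hquad, not_hasFreeResolutionOfLength hres.1 hres.2.2.2 g.1⟩
end

section
/- Let B⁽¹⁾ ∈ ℤ^{n₁×m₁} and B⁽²⁾ ∈ ℤ^{n₂×m₂} have ranks m₁ and m₂ respectively, with ℤB⁽¹⁾ and ℤB⁽²⁾ positive lattices, and let B ∈ ℤ^{(n₁+n₂)×(m₁+m₂)} be the block-diagonal matrix with blocks B⁽¹⁾, B⁽²⁾. Then the binomials x^{u_+} − x^{u_−} corresponding to the columns u of B generate I_{ℤB} if and only if, for i = 1, 2, the binomials corresponding to the columns of B⁽ⁱ⁾ generate I_{ℤB⁽ⁱ⁾}. -/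
/-!
The lattice of the block-diagonal matrix is `L₁ ⊕ L₂`.  Two facts give the equivalence.

* `latticeBinomial_sumElim`: since
  `x^{u₊} y^{v₊} - x^{u₋} y^{v₋} = x^{u₊} (y^{v₊} - y^{v₋}) + y^{v₋} (x^{u₊} - x^{u₋})`,
  the ideal `I_{L₁ ⊕ L₂}` is generated by the extensions of `I_{L₁}` and `I_{L₂}`.  So
  generators of the two blocks together generate the ideal of the sum.
* `setInrOne`, `setInlOne`: specializing the variables of one block to `1` is a retraction of
  `k[x, y]` onto the polynomial ring of the other block, and it kills every binomial coming from
  the first one.  Applied to a membership in the ideal of the columns of the block matrix, it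
  gives membership in the ideal of the columns of a single block.
-/


open MvPolynomial

section BlockIdeals

variable {V W κ τ : Type*}

/-- The monomial with exponent the positive part `u₊`, as a product over all variables. -/
noncomputable def posMonomial [Fintype V] (k : Type*) [CommRing k] (u : V → ℤ) : MvPolynomial V k :=
  ∏ i, X i ^ (u i).toNat

lemma latticeBinomial_eq [Fintype V] (k : Type*) [CommRing k] (u : V → ℤ) :
    latticeBinomial k u = posMonomial k u - posMonomial k (-u) := by
  simp [latticeBinomial, posMonomial, monomial_eq, Finsupp.prod_fintype, posExp, negExp]

lemma latticeBinomial_zero [Fintype V] (k : Type*) [CommRing k] :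
    latticeBinomial k (0 : V → ℤ) = 0 := by
  simp [latticeBinomial_eq]

lemma posMonomial_sumElim [Fintype V] [Fintype W] (k : Type*) [CommRing k]
    (u : V → ℤ) (v : W → ℤ) :
    posMonomial k (Sum.elim u v) =
      rename Sum.inl (posMonomial k u) * rename Sum.inr (posMonomial k v) := by
  simp [posMonomial, Fintype.prod_sum_type]

lemma latticeBinomial_sumElim [Fintype V] [Fintype W] (k : Type*) [CommRing k]
    (u : V → ℤ) (v : W → ℤ) :
    latticeBinomial k (Sum.elim u v) =
      rename Sum.inl (posMonomial k u) * rename Sum.inr (latticeBinomial k v) +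
      rename Sum.inr (posMonomial k (-v)) * rename Sum.inl (latticeBinomial k u) := by
  have h : -Sum.elim u v = Sum.elim (-u) (-v) := by
    ext (i | i) <;> rfl
  simp only [latticeBinomial_eq, h, posMonomial_sumElim, map_sub]
  ring

lemma latticeBinomial_sumElim_zero [Fintype V] [Fintype W] (k : Type*) [CommRing k] (u : V → ℤ) :
    latticeBinomial k (Sum.elim u (0 : W → ℤ)) = rename Sum.inl (latticeBinomial k u) := by
  rw [latticeBinomial_sumElim, latticeBinomial_zero]
  simp [posMonomial]

lemma latticeBinomial_zero_sumElim [Fintype V] [Fintype W] (k : Type*) [CommRing k] (v : W → ℤ) :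
    latticeBinomial k (Sum.elim (0 : V → ℤ) v) = rename Sum.inr (latticeBinomial k v) := by
  rw [latticeBinomial_sumElim, latticeBinomial_zero]
  simp [posMonomial]

/-- The specialization `k[x, y] → k[x]` setting every variable `y` to `1`. -/
noncomputable def setInrOne (k V W : Type*) [CommRing k] :
    MvPolynomial (V ⊕ W) k →ₐ[k] MvPolynomial V k :=
  aeval (Sum.elim X fun _ => 1)

/-- The specialization `k[x, y] → k[y]` setting every variable `x` to `1`. -/
noncomputable def setInlOne (k V W : Type*) [CommRing k] :
    MvPolynomial (V ⊕ W) k →ₐ[k] MvPolynomial W k :=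
  aeval (Sum.elim (fun _ => 1) X)

lemma setInrOne_rename_inl {k : Type*} [CommRing k] (p : MvPolynomial V k) :
    setInrOne k V W (rename Sum.inl p) = p := by
  rw [setInrOne, aeval_rename, Sum.elim_comp_inl, aeval_X_left_apply]

lemma setInlOne_rename_inr {k : Type*} [CommRing k] (p : MvPolynomial W k) :
    setInlOne k V W (rename Sum.inr p) = p := by
  rw [setInlOne, aeval_rename, Sum.elim_comp_inr, aeval_X_left_apply]

lemma setInrOne_latticeBinomial_inr [Fintype W] (k : Type*) [CommRing k] (v : W → ℤ) :
    setInrOne k V W (rename Sum.inr (latticeBinomial k v)) = 0 := by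
  simp [setInrOne, latticeBinomial_eq, posMonomial]

lemma setInlOne_latticeBinomial_inl [Fintype V] (k : Type*) [CommRing k] (u : V → ℤ) :
    setInlOne k V W (rename Sum.inl (latticeBinomial k u)) = 0 := by
  simp [setInlOne, latticeBinomial_eq, posMonomial]

/-- The ideal generated by the binomials of the columns of `B`. -/
noncomputable def columnIdeal [Fintype V] (k : Type*) [CommRing k] (B : Matrix V κ ℤ) :
    Ideal (MvPolynomial V k) :=
  Ideal.span (Set.range fun j => latticeBinomial k fun i => B i j)

lemma columnIdeal_le [Fintype V] [Fintype κ] (k : Type*) [CommRing k] (B : Matrix V κ ℤ) :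
    columnIdeal k B ≤ latticeIdeal k (colSpan B) := by
  classical
  refine Ideal.span_mono ?_
  rintro _ ⟨j, rfl⟩
  refine ⟨_, ⟨Pi.single j 1, ?_⟩, rfl⟩
  ext i
  simp

lemma columnIdeal_fromBlocks [Fintype V] [Fintype W]
    (k : Type*) [CommRing k] (B₁ : Matrix V κ ℤ) (B₂ : Matrix W τ ℤ) :
    columnIdeal k (Matrix.fromBlocks B₁ 0 0 B₂) =
      (columnIdeal k B₁).map (rename Sum.inl) ⊔ (columnIdeal k B₂).map (rename Sum.inr) := by
  have hl (j : κ) : (fun i => Matrix.fromBlocks B₁ 0 0 B₂ i (Sum.inl j)) =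
      Sum.elim (fun i => B₁ i j) (0 : W → ℤ) := by
    ext (i | i) <;> rfl
  have hr (j : τ) : (fun i => Matrix.fromBlocks B₁ 0 0 B₂ i (Sum.inr j)) =
      Sum.elim (0 : V → ℤ) (fun i => B₂ i j) := by
    ext (i | i) <;> rfl
  simp only [columnIdeal, Ideal.map_span, ← Ideal.span_union, ← Set.range_comp]
  rw [← Set.Sum.elim_range]
  congr 2
  ext1 (j | j)
  · simp [hl, latticeBinomial_sumElim_zero]
  · simp [hr, latticeBinomial_zero_sumElim]

lemma sumElim_mem_colSpan [Fintype κ] [Fintype τ] (B₁ : Matrix V κ ℤ) (B₂ : Matrix W τ ℤ)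
    (u : V → ℤ) (v : W → ℤ) :
    Sum.elim u v ∈ colSpan (Matrix.fromBlocks B₁ 0 0 B₂) ↔
      u ∈ colSpan B₁ ∧ v ∈ colSpan B₂ := by
  constructor
  · rintro ⟨c, hc⟩
    rw [Matrix.mulVecLin_apply, Matrix.fromBlocks_mulVec] at hc
    refine ⟨⟨c ∘ Sum.inl, ?_⟩, ⟨c ∘ Sum.inr, ?_⟩⟩
    · ext i
      simpa using congrFun hc (Sum.inl i)
    · ext i
      simpa using congrFun hc (Sum.inr i)
  · rintro ⟨⟨a, rfl⟩, ⟨b, rfl⟩⟩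
    refine ⟨Sum.elim a b, ?_⟩
    simp [Matrix.fromBlocks_mulVec]

lemma latticeIdeal_fromBlocks [Fintype V] [Fintype W] [Fintype κ] [Fintype τ]
    (k : Type*) [CommRing k] (B₁ : Matrix V κ ℤ) (B₂ : Matrix W τ ℤ) :
    latticeIdeal k (colSpan (Matrix.fromBlocks B₁ 0 0 B₂)) =
      (latticeIdeal k (colSpan B₁)).map (rename Sum.inl) ⊔
        (latticeIdeal k (colSpan B₂)).map (rename Sum.inr) := by
  apply le_antisymm
  · refine Ideal.span_le.mpr ?_
    rintro _ ⟨w, hw, rfl⟩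
    obtain ⟨u, v, rfl⟩ : ∃ u v, w = Sum.elim u v :=
      ⟨w ∘ Sum.inl, w ∘ Sum.inr, (Sum.elim_comp_inl_inr w).symm⟩
    obtain ⟨hu, hv⟩ := (sumElim_mem_colSpan B₁ B₂ u v).mp hw
    rw [latticeBinomial_sumElim, SetLike.mem_coe]
    refine add_mem (Ideal.mul_mem_left _ _ ?_) (Ideal.mul_mem_left _ _ ?_)
    · exact Ideal.mem_sup_right (Ideal.mem_map_of_mem _ (Ideal.subset_span ⟨v, hv, rfl⟩))
    · exact Ideal.mem_sup_left (Ideal.mem_map_of_mem _ (Ideal.subset_span ⟨u, hu, rfl⟩))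
  · refine sup_le ?_ ?_ <;> rw [latticeIdeal, Ideal.map_span, Ideal.span_le]
    · rintro _ ⟨_, ⟨u, hu, rfl⟩, rfl⟩
      refine Ideal.subset_span ⟨Sum.elim u 0, ?_, (latticeBinomial_sumElim_zero k u).symm⟩
      exact (sumElim_mem_colSpan B₁ B₂ u 0).mpr ⟨hu, zero_mem _⟩
    · rintro _ ⟨_, ⟨v, hv, rfl⟩, rfl⟩
      refine Ideal.subset_span ⟨Sum.elim 0 v, ?_, (latticeBinomial_zero_sumElim k v).symm⟩
      exact (sumElim_mem_colSpan B₁ B₂ 0 v).mpr ⟨zero_mem _, hv⟩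

lemma mem_columnIdeal_of_rename_inl [Fintype V] [Fintype W] {k : Type*} [CommRing k]
    {B₁ : Matrix V κ ℤ} {B₂ : Matrix W τ ℤ} {p : MvPolynomial V k}
    (hp : rename Sum.inl p ∈ columnIdeal k (Matrix.fromBlocks B₁ 0 0 B₂)) :
    p ∈ columnIdeal k B₁ := by
  rw [columnIdeal_fromBlocks] at hp
  suffices h : (columnIdeal k B₁).map (rename Sum.inl) ⊔ (columnIdeal k B₂).map (rename Sum.inr) ≤
      (columnIdeal k B₁).comap (setInrOne k V W) by
    simpa only [Ideal.mem_comap, setInrOne_rename_inl] using h hp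
  refine sup_le (Ideal.map_le_iff_le_comap.mpr fun q hq => ?_) ?_
  · simpa only [Ideal.mem_comap, setInrOne_rename_inl] using hq
  · rw [columnIdeal, Ideal.map_span, Ideal.span_le]
    rintro _ ⟨_, ⟨j, rfl⟩, rfl⟩
    simp only [SetLike.mem_coe, Ideal.mem_comap, setInrOne_latticeBinomial_inr, zero_mem]

lemma mem_columnIdeal_of_rename_inr [Fintype V] [Fintype W] {k : Type*} [CommRing k]
    {B₁ : Matrix V κ ℤ} {B₂ : Matrix W τ ℤ} {p : MvPolynomial W k}
    (hp : rename Sum.inr p ∈ columnIdeal k (Matrix.fromBlocks B₁ 0 0 B₂)) :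
    p ∈ columnIdeal k B₂ := by
  rw [columnIdeal_fromBlocks] at hp
  suffices h : (columnIdeal k B₁).map (rename Sum.inl) ⊔ (columnIdeal k B₂).map (rename Sum.inr) ≤
      (columnIdeal k B₂).comap (setInlOne k V W) by
    simpa only [Ideal.mem_comap, setInlOne_rename_inr] using h hp
  refine sup_le ?_ (Ideal.map_le_iff_le_comap.mpr fun q hq => ?_)
  · rw [columnIdeal, Ideal.map_span, Ideal.span_le]
    rintro _ ⟨_, ⟨j, rfl⟩, rfl⟩
    simp only [SetLike.mem_coe, Ideal.mem_comap, setInlOne_latticeBinomial_inl, zero_mem]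
  · simpa only [Ideal.mem_comap, setInlOne_rename_inr] using hq

end BlockIdeals

/-- Lemma `lemma:blockCI`: for block-diagonal `B` with blocks
`B⁽¹⁾, B⁽²⁾` of full ranks spanning positive lattices, the binomials of the columns of
`B` generate `I_{ℤB}` iff the binomials of the columns of `B⁽ⁱ⁾` generate `I_{ℤB⁽ⁱ⁾}`
for `i = 1, 2`. -/
theorem statement12 (k : Type*) [Field k] {n₁ n₂ m₁ m₂ : ℕ}
    (B₁ : Matrix (Fin n₁) (Fin m₁) ℤ) (B₂ : Matrix (Fin n₂) (Fin m₂) ℤ)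
    (h₁ : B₁.rank = m₁) (h₂ : B₂.rank = m₂)
    (hp₁ : IsPositiveLattice (colSpan B₁)) (hp₂ : IsPositiveLattice (colSpan B₂)) :
    Ideal.span (Set.range fun j : Fin m₁ ⊕ Fin m₂ =>
        latticeBinomial k fun i => Matrix.fromBlocks B₁ 0 0 B₂ i j) =
      latticeIdeal k (colSpan (Matrix.fromBlocks B₁ 0 0 B₂)) ↔
    (Ideal.span (Set.range fun j : Fin m₁ => latticeBinomial k fun i => B₁ i j) =
        latticeIdeal k (colSpan B₁) ∧
      Ideal.span (Set.range fun j : Fin m₂ => latticeBinomial k fun i => B₂ i j) =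
        latticeIdeal k (colSpan B₂)) := by
  change columnIdeal k (Matrix.fromBlocks B₁ 0 0 B₂) = _ ↔
    columnIdeal k B₁ = _ ∧ columnIdeal k B₂ = _
  constructor
  · intro h
    rw [latticeIdeal_fromBlocks] at h
    refine ⟨le_antisymm (columnIdeal_le k B₁) fun p hp => ?_,
      le_antisymm (columnIdeal_le k B₂) fun p hp => ?_⟩
    · apply mem_columnIdeal_of_rename_inl (B₂ := B₂)
      rw [h]
      exact Ideal.mem_sup_left (Ideal.mem_map_of_mem _ hp)
    · apply mem_columnIdeal_of_rename_inr (B₁ := B₁)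
      rw [h]
      exact Ideal.mem_sup_right (Ideal.mem_map_of_mem _ hp)
  · rintro ⟨e₁, e₂⟩
    rw [columnIdeal_fromBlocks, latticeIdeal_fromBlocks, e₁, e₂]
end
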